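/- arXiv:2503.02136 — 13 statements merged into one kernel-verified Lean document; each statement's English description precedes it below -/
import Mathlib

section
/- If there exists a strong Gallai-Schur r-coloring of [1, m], then there exists a strong Gallai-Schur (r+1)-coloring of [1, 2m+1]. Explicitly, such a coloring is obtained by giving all odd numbers in [1, 2m+1] a new color and giving each even number 2x the color that x had in the original coloring. -/
/-- A strong Gallai–Schur coloring of the interval `[1, m]` with color set `C`:
`χ` maps `[1, m]` into `C`, is surjective onto `C`, admits no monochromatic
solution of `a + b = c` (with `a = b` allowed), and admits no rainbow solution
of `a + b = c`. -/
def StrongGS (m : ℕ) (C : Finset ℕ) (χ : ℕ → ℕ) : Prop :=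
  (∀ x ∈ Finset.Icc 1 m, χ x ∈ C) ∧
  (∀ i ∈ C, ∃ x ∈ Finset.Icc 1 m, χ x = i) ∧
  (∀ a ∈ Finset.Icc 1 m, ∀ b ∈ Finset.Icc 1 m, ∀ c ∈ Finset.Icc 1 m,
      a + b = c → ¬(χ a = χ b ∧ χ b = χ c)) ∧
  (∀ a ∈ Finset.Icc 1 m, ∀ b ∈ Finset.Icc 1 m, ∀ c ∈ Finset.Icc 1 m,
      a + b = c → ¬(χ a ≠ χ b ∧ χ a ≠ χ c ∧ χ b ≠ χ c))

/-- **2-fold construction, strong case.** If there is a strong Gallai–Schur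
`r`-coloring of `[1, m]`, then there is a strong Gallai–Schur `(r+1)`-coloring
of `[1, 2m+1]`; explicitly, one obtained by giving all odd numbers the new
color `r + 1` and giving each even number `2x` the color that `x` had. -/
theorem strong_twofold (m r : ℕ) (hm : 1 ≤ m) (hr : 1 ≤ r) (χ : ℕ → ℕ)
    (h : StrongGS m (Finset.Icc 1 r) χ) :
    (∃ χ' : ℕ → ℕ, StrongGS (2 * m + 1) (Finset.Icc 1 (r + 1)) χ') ∧
    StrongGS (2 * m + 1) (Finset.Icc 1 (r + 1))
      (fun x => if Odd x then r + 1 else χ (x / 2)) := by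
  suffices H : StrongGS (2 * m + 1) (Finset.Icc 1 (r + 1))
      (fun x => if Odd x then r + 1 else χ (x / 2)) from ⟨⟨_, H⟩, H⟩
  obtain ⟨h1, h2, h3, h4⟩ := h
  simp only [Finset.mem_Icc] at h1 h2 h3 h4
  have key : ∀ x, 1 ≤ x → x ≤ 2 * m + 1 → ¬ Odd x →
      1 ≤ x / 2 ∧ x / 2 ≤ m ∧ x = 2 * (x / 2) ∧ 1 ≤ χ (x / 2) ∧ χ (x / 2) ≤ r := by
    intro x hx hx' ho
    rw [Nat.odd_iff] at ho
    have := h1 (x / 2) (by omega)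
    omega
  refine ⟨?_, ?_, ?_, ?_⟩
  · intro x hx
    rw [Finset.mem_Icc] at hx ⊢
    by_cases ho : Odd x
    · simp [ho]
    · have := key x hx.1 hx.2 ho
      simp only [ho, if_false]
      omega
  · intro i hi
    rw [Finset.mem_Icc] at hi
    by_cases hir : i = r + 1
    · exact ⟨1, by simp, by simp [hir]⟩
    · obtain ⟨x, hx, hxi⟩ := h2 i (by omega)
      refine ⟨2 * x, by rw [Finset.mem_Icc]; omega, ?_⟩
      have ho : ¬ Odd (2 * x) := by rw [Nat.odd_iff]; omega
      simp [hxi]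
  all_goals
    intro a ha b hb c hc habc
    rw [Finset.mem_Icc] at ha hb hc
    have ka := key a ha.1 ha.2
    have kb := key b hb.1 hb.2
    have kc := key c hc.1 hc.2
    have t3 := h3 (a / 2)
    have t4 := h4 (a / 2)
    by_cases oa : Odd a <;> by_cases ob : Odd b <;> by_cases oc : Odd c <;>
      simp only [oa, ob, oc, if_true, if_false, not_true_eq_false, not_false_eq_true,
        true_imp_iff, false_imp_iff] at ka kb kc ⊢ <;>
      first
      | omega
      | (rw [Nat.odd_iff] at oa ob oc; omega)
      | exact t3 (by omega) (b / 2) (by omega) (c / 2) (by omega) (by omega)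
      | exact t4 (by omega) (b / 2) (by omega) (c / 2) (by omega) (by omega)
end

section
/- If there exists a weak Gallai-Schur r-coloring of [1, m], then there exists a weak Gallai-Schur (r+1)-coloring of [1, 2m+1]. Explicitly, such a coloring is obtained by giving all odd numbers in [1, 2m+1] a new color and giving each even number 2x the color that x had in the original coloring. -/
/-- A weak Gallai–Schur coloring of the interval `[1, m]` with color set `C`:
`χ` maps `[1, m]` into `C`, is surjective onto `C`, admits no monochromatic
solution of `a + b = c` with `a`, `b`, `c` pairwise distinct, and admits no
rainbow solution of `a + b = c`. -/
def WeakGS (m : ℕ) (C : Finset ℕ) (χ : ℕ → ℕ) : Prop :=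
  (∀ x ∈ Finset.Icc 1 m, χ x ∈ C) ∧
  (∀ i ∈ C, ∃ x ∈ Finset.Icc 1 m, χ x = i) ∧
  (∀ a ∈ Finset.Icc 1 m, ∀ b ∈ Finset.Icc 1 m, ∀ c ∈ Finset.Icc 1 m,
      a + b = c → a ≠ b → a ≠ c → b ≠ c → ¬(χ a = χ b ∧ χ b = χ c)) ∧
  (∀ a ∈ Finset.Icc 1 m, ∀ b ∈ Finset.Icc 1 m, ∀ c ∈ Finset.Icc 1 m,
      a + b = c → ¬(χ a ≠ χ b ∧ χ a ≠ χ c ∧ χ b ≠ χ c))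

/-- **2-fold construction, weak case.** If there is a weak Gallai–Schur
`r`-coloring of `[1, m]`, then there is a weak Gallai–Schur `(r+1)`-coloring
of `[1, 2m+1]`; explicitly, one obtained by giving all odd numbers the new
color `r + 1` and giving each even number `2x` the color that `x` had. -/
theorem weak_twofold (m r : ℕ) (hm : 1 ≤ m) (hr : 1 ≤ r) (χ : ℕ → ℕ)
    (h : WeakGS m (Finset.Icc 1 r) χ) :
    (∃ χ' : ℕ → ℕ, WeakGS (2 * m + 1) (Finset.Icc 1 (r + 1)) χ') ∧
    WeakGS (2 * m + 1) (Finset.Icc 1 (r + 1))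
      (fun x => if Odd x then r + 1 else χ (x / 2)) := by
  have key : WeakGS (2 * m + 1) (Finset.Icc 1 (r + 1))
      (fun x => if Odd x then r + 1 else χ (x / 2)) := by
    obtain ⟨h1, h2, h3, h4⟩ := h
    simp only [Finset.mem_Icc] at h1 h2 h3 h4
    refine ⟨?_, ?_, ?_, ?_⟩
    · intro x hx
      simp only [Finset.mem_Icc, Nat.odd_iff] at *
      split_ifs with ho
      · omega
      · have := h1 (x / 2) (by omega)
        omega
    · intro i hi
      simp only [Finset.mem_Icc, Nat.odd_iff] at *
      by_cases hir : i = r + 1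
      · exact ⟨1, by omega, by simp [hir]⟩
      · obtain ⟨x, hx, hxi⟩ := h2 i (by omega)
        refine ⟨2 * x, by omega, ?_⟩
        rw [if_neg (by omega), show 2 * x / 2 = x by omega, hxi]
    · intro a ha b hb c hc habc hab hac hbc
      simp only [Finset.mem_Icc, Nat.odd_iff] at *
      rintro ⟨e1, e2⟩
      have A := h1 (a / 2)
      have B := h1 (b / 2)
      have C := h1 (c / 2)
      have T := h3 (a / 2)
      split_ifs at e1 e2 <;> try omega
      exact T (by omega) (b / 2) (by omega) (c / 2) (by omega) (by omega) (by omega)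
        (by omega) (by omega) ⟨e1, e2⟩
    · intro a ha b hb c hc habc
      simp only [Finset.mem_Icc, Nat.odd_iff] at *
      rintro ⟨e1, e2, e3⟩
      by_cases pa : a % 2 = 1
      · by_cases pb : b % 2 = 1
        · simp [pa, pb] at e1
        · have pc : c % 2 = 1 := by omega
          simp [pa, pc] at e2
      · by_cases pb : b % 2 = 1
        · have pc : c % 2 = 1 := by omega
          simp [pb, pc] at e3
        · have pc : ¬ c % 2 = 1 := by omega
          rw [if_neg pa, if_neg pb] at e1
          rw [if_neg pa, if_neg pc] at e2
          rw [if_neg pb, if_neg pc] at e3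
          exact h4 (a / 2) (by omega) (b / 2) (by omega) (c / 2) (by omega) (by omega)
            ⟨e1, e2, e3⟩
  exact ⟨⟨_, key⟩, key⟩
end

section
/- If there exists a strong Gallai-Schur r-coloring of [1, m], then there exists a strong Gallai-Schur (r+2)-coloring of [1, 5m+4]. Explicitly, such a coloring is obtained by giving all numbers congruent to 2 or 3 modulo 5 one new color, giving all numbers congruent to 1 or 4 modulo 5 a second new color, and giving each multiple of 5, say 5x, the color that x had in the original coloring. -/
/-- **5-fold construction, strong case.** If there is a strong Gallai–Schur
`r`-coloring of `[1, m]`, then there is a strong Gallai–Schur `(r+2)`-coloring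
of `[1, 5m+4]`; explicitly, one obtained by giving the numbers congruent to
`2` or `3` mod `5` the new color `r + 1`, the numbers congruent to `1` or `4`
mod `5` the new color `r + 2`, and each multiple `5x` of `5` the color `x` had. -/
theorem strong_fivefold (m r : ℕ) (hm : 1 ≤ m) (hr : 1 ≤ r) (χ : ℕ → ℕ)
    (h : StrongGS m (Finset.Icc 1 r) χ) :
    (∃ χ' : ℕ → ℕ, StrongGS (5 * m + 4) (Finset.Icc 1 (r + 2)) χ') ∧
    StrongGS (5 * m + 4) (Finset.Icc 1 (r + 2))
      (fun x => if x % 5 = 2 ∨ x % 5 = 3 then r + 1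
                else if x % 5 = 1 ∨ x % 5 = 4 then r + 2
                else χ (x / 5)) := by
  rw [and_iff_right_of_imp (fun h' => ⟨_, h'⟩)]
  obtain ⟨h1, h2, h3, h4⟩ := h
  simp only [Finset.mem_Icc] at h1 h2 h3 h4
  generalize hf : (fun x => if x % 5 = 2 ∨ x % 5 = 3 then r + 1
                else if x % 5 = 1 ∨ x % 5 = 4 then r + 2
                else χ (x / 5)) = f
  have key : ∀ x, 1 ≤ x ∧ x ≤ 5 * m + 4 →
      ((x % 5 = 2 ∨ x % 5 = 3) ∧ f x = r + 1) ∨ ((x % 5 = 1 ∨ x % 5 = 4) ∧ f x = r + 2) ∨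
      (x % 5 = 0 ∧ f x = χ (x / 5) ∧ (1 ≤ x / 5 ∧ x / 5 ≤ m) ∧ 1 ≤ f x ∧ f x ≤ r) := by
    intro x hx
    by_cases c1 : x % 5 = 2 ∨ x % 5 = 3
    · left; exact ⟨c1, by rw [← hf]; simp only [if_pos c1]⟩
    by_cases c2 : x % 5 = 1 ∨ x % 5 = 4
    · right; left; exact ⟨c2, by rw [← hf]; simp only [if_neg c1, if_pos c2]⟩
    right; right
    have e : f x = χ (x / 5) := by rw [← hf]; simp only [if_neg c1, if_neg c2]
    have hr : 1 ≤ x / 5 ∧ x / 5 ≤ m := by omega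
    exact ⟨by omega, e, hr, by rw [e]; exact h1 _ hr⟩
  clear hf
  refine ⟨?_, ?_, ?_, ?_⟩
  · intro x hx
    rw [Finset.mem_Icc] at hx ⊢
    have := key x hx
    omega
  · intro i hi
    simp only [Finset.mem_Icc] at hi ⊢
    by_cases c1 : i = r + 1
    · refine ⟨2, by omega, ?_⟩
      have := key 2 (by omega)
      omega
    by_cases c2 : i = r + 2
    · refine ⟨1, by omega, ?_⟩
      have := key 1 (by omega)
      omega
    obtain ⟨x, hx, rfl⟩ := h2 i (by omega)
    refine ⟨5 * x, by omega, ?_⟩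
    have := key (5 * x) (by omega)
    rw [show 5 * x / 5 = x by omega] at this
    omega
  · intro a ha b hb c hc hab
    rw [Finset.mem_Icc] at ha hb hc
    rcases key a ha with ka | ka | ⟨a0, ea, ra, ka⟩ <;>
    rcases key b hb with kb | kb | ⟨b0, eb, rb, kb⟩ <;>
    rcases key c hc with kc | kc | ⟨c0, ec, rc, kc⟩ <;> try omega
    rw [ea, eb, ec]
    exact h3 _ ra _ rb _ rc (by omega)
  · intro a ha b hb c hc hab
    rw [Finset.mem_Icc] at ha hb hc
    rcases key a ha with ka | ka | ⟨a0, ea, ra, ka⟩ <;>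
    rcases key b hb with kb | kb | ⟨b0, eb, rb, kb⟩ <;>
    rcases key c hc with kc | kc | ⟨c0, ec, rc, kc⟩ <;> try omega
    rw [ea, eb, ec]
    exact h4 _ ra _ rb _ rc (by omega)
end

section
/- If there exists a weak Gallai-Schur r-coloring of [1, m], then there exists a weak Gallai-Schur (r+2)-coloring of [1, 5m+4]. Explicitly, such a coloring is obtained by giving all numbers congruent to 2 or 3 modulo 5 one new color, giving all numbers congruent to 1 or 4 modulo 5 a second new color, and giving each multiple of 5, say 5x, the color that x had in the original coloring. -/
/-- **5-fold construction, weak case.** If there is a weak Gallai–Schur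
`r`-coloring of `[1, m]`, then there is a weak Gallai–Schur `(r+2)`-coloring
of `[1, 5m+4]`; explicitly, one obtained by giving the numbers congruent to
`2` or `3` mod `5` the new color `r + 1`, the numbers congruent to `1` or `4`
mod `5` the new color `r + 2`, and each multiple `5x` of `5` the color `x` had. -/
theorem weak_fivefold (m r : ℕ) (hm : 1 ≤ m) (hr : 1 ≤ r) (χ : ℕ → ℕ)
    (h : WeakGS m (Finset.Icc 1 r) χ) :
    (∃ χ' : ℕ → ℕ, WeakGS (5 * m + 4) (Finset.Icc 1 (r + 2)) χ') ∧
    WeakGS (5 * m + 4) (Finset.Icc 1 (r + 2))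
      (fun x => if x % 5 = 2 ∨ x % 5 = 3 then r + 1
                else if x % 5 = 1 ∨ x % 5 = 4 then r + 2
                else χ (x / 5)) := by
  suffices hs : WeakGS (5 * m + 4) (Finset.Icc 1 (r + 2))
      (fun x => if x % 5 = 2 ∨ x % 5 = 3 then r + 1
                else if x % 5 = 1 ∨ x % 5 = 4 then r + 2
                else χ (x / 5)) from ⟨⟨_, hs⟩, hs⟩
  obtain ⟨h1, h2, h3, h4⟩ := h
  simp only [Finset.mem_Icc] at h1 h2 h3 h4
  -- each number of the interval is in one of three classes, with known color
  have key : ∀ F : ℕ → ℕ, F = (fun x => if x % 5 = 2 ∨ x % 5 = 3 then r + 1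
                else if x % 5 = 1 ∨ x % 5 = 4 then r + 2
                else χ (x / 5)) → ∀ x, 1 ≤ x ∧ x ≤ 5 * m + 4 →
      ((x % 5 = 2 ∨ x % 5 = 3) ∧ F x = r + 1) ∨ ((x % 5 = 1 ∨ x % 5 = 4) ∧ F x = r + 2) ∨
      (∃ y, x = 5 * y ∧ (1 ≤ y ∧ y ≤ m) ∧ F x = χ y ∧ 1 ≤ χ y ∧ χ y ≤ r) := by
    rintro F rfl x hx
    by_cases c1 : x % 5 = 2 ∨ x % 5 = 3
    · left; simp [c1]
    by_cases c2 : x % 5 = 1 ∨ x % 5 = 4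
    · right; left; simp [c1, c2]
    · right; right
      have hy : 1 ≤ x / 5 ∧ x / 5 ≤ m := by omega
      exact ⟨x / 5, by omega, hy, by simp [c1, c2], h1 _ hy⟩
  have surj : ∀ i, 1 ≤ i ∧ i ≤ r + 2 → ∃ x, (1 ≤ x ∧ x ≤ 5 * m + 4) ∧
      (if x % 5 = 2 ∨ x % 5 = 3 then r + 1
                else if x % 5 = 1 ∨ x % 5 = 4 then r + 2
                else χ (x / 5)) = i := by
    intro i hi
    rcases (by omega : i = r + 1 ∨ i = r + 2 ∨ i ≤ r) with rfl | rfl | hir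
    · exact ⟨2, by omega, by simp⟩
    · exact ⟨1, by omega, by simp⟩
    · obtain ⟨y, hy, rfl⟩ := h2 i ⟨hi.1, hir⟩
      exact ⟨5 * y, by omega, by simp⟩
  generalize hF : (fun x => if x % 5 = 2 ∨ x % 5 = 3 then r + 1
                else if x % 5 = 1 ∨ x % 5 = 4 then r + 2
                else χ (x / 5)) = F
  have key := key F hF.symm
  refine ⟨?_, ?_, ?_, ?_⟩
  · intro x hx
    rw [Finset.mem_Icc] at hx ⊢
    rcases key x hx with h | h | ⟨y, h⟩ <;> omega
  · intro i hi
    rw [Finset.mem_Icc] at hi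
    obtain ⟨x, hx, hi⟩ := surj i hi
    exact ⟨x, Finset.mem_Icc.2 hx, by rw [← hF]; exact hi⟩
  · intro a ha b hb c hc habc hab hac hbc hh
    rw [Finset.mem_Icc] at ha hb hc
    rcases key a ha with h | h | ⟨x, h⟩ <;> rcases key b hb with hy | hy | ⟨y, hy⟩ <;>
      rcases key c hc with hz | hz | ⟨z, hz⟩ <;> try omega
    exact h3 x h.2.1 y hy.2.1 z hz.2.1 (by omega) (by omega) (by omega) (by omega) (by omega)
  · intro a ha b hb c hc habc hh
    rw [Finset.mem_Icc] at ha hb hc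
    rcases key a ha with h | h | ⟨x, h⟩ <;> rcases key b hb with hy | hy | ⟨y, hy⟩ <;>
      rcases key c hc with hz | hz | ⟨z, hz⟩ <;> try omega
    exact h4 x h.2.1 y hy.2.1 z hz.2.1 (by omega) (by omega)
end

section
/- Let r > 3 and let χ be a strong Gallai-Schur r-coloring of [1, m] that is maximal, i.e., no strong Gallai-Schur r-coloring of [1, m'] exists for any m' > m. Then exactly one of the following holds. (a) m ≡ 4 (mod 5); the set of x ∈ [1,m] with x ≡ 1 or 4 (mod 5) is a single color class of χ; the set of x ∈ [1,m] with x ≡ 2 or 3 (mod 5) is a single color class of χ; every multiple of 5 in [1,m] receives one of the remaining r−2 colors, and the induced coloring x ↦ χ(5x) of [1, (m−4)/5] by these r−2 colors is a strong Gallai-Schur (r−2)-coloring. (b) m is odd; the set of odd numbers in [1,m] is a single color class of χ; every even number in [1,m] receives one of the remaining r−1 colors, and the induced coloring x ↦ χ(2x) of [1, (m−1)/2] by these r−1 colors is a strong Gallai-Schur (r−1)-coloring. -/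
/-- Odd numbers form the color class of `χ 1`. -/
def StructB (m : ℕ) (χ : ℕ → ℕ) : Prop :=
  ∀ x, 1 ≤ x → x ≤ m → (χ x = χ 1 ↔ x % 2 = 1)

/-- Residues `1,4` and `2,3` mod `5` form the color classes of `χ 1`, `χ 2`. -/
def StructA (m : ℕ) (χ : ℕ → ℕ) : Prop :=
  3 ≤ m ∧ χ 1 ≠ χ 2 ∧
    ∀ x, 1 ≤ x → x ≤ m → ((χ x = χ 1 ↔ (x % 5 = 1 ∨ x % 5 = 4)) ∧
      (χ x = χ 2 ↔ (x % 5 = 2 ∨ x % 5 = 3)))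

theorem struct_dichotomy (χ : ℕ → ℕ) (m : ℕ) (hm : 1 ≤ m)
    (hmono : ∀ a b, 1 ≤ a → 1 ≤ b → a + b ≤ m → ¬ (χ a = χ b ∧ χ b = χ (a + b)))
    (hrain : ∀ a b, 1 ≤ a → 1 ≤ b → a + b ≤ m →
      χ a = χ b ∨ χ a = χ (a + b) ∨ χ b = χ (a + b)) :
    StructB m χ ∨ StructA m χ := by
  induction m, hm using Nat.le_induction with
  | base =>
    left
    intro x h1 h2
    obtain rfl : x = 1 := by omega
    simp
  | succ m hm ih =>
    have ih := ih (fun a b ha hb hab => hmono a b ha hb (by omega))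
      (fun a b ha hb hab => hrain a b ha hb (by omega))
    rcases ih with hB | ⟨h3, h12, hA⟩
    · rcases Nat.mod_two_eq_zero_or_one m with he | ho
      · -- `m` even
        have hm0 : χ m ≠ χ 1 := fun h => by
          have := (hB m (by omega) le_rfl).1 h
          omega
        by_cases hc : χ (m + 1) = χ 1
        · left
          intro x h1 h2
          rcases Nat.lt_or_ge m x with hx | hx
          · obtain rfl : x = m + 1 := by omega
            simp only [hc, true_iff]; omega
          · exact hB x h1 hx
        · have hcm : χ (m + 1) = χ m := by
            have := hrain m 1 hm le_rfl le_rfl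
            grind
          have hev : ∀ x, 1 ≤ x → x ≤ m → x % 2 = 0 → χ x = χ m := by
            intro x h1 h2 hx
            have hxne : χ x ≠ χ 1 := fun h => by
              have := (hB x h1 h2).1 h
              omega
            have hodd : χ (m + 1 - x) = χ 1 := (hB _ (by omega) (by omega)).2 (by omega)
            have := hrain x (m + 1 - x) h1 (by omega) (by omega)
            rw [show x + (m + 1 - x) = m + 1 by omega] at this
            grind
          by_cases h4 : 4 ≤ m
          · exfalso
            refine hmono 2 2 (by omega) (by omega) (by omega) ⟨rfl, ?_⟩
            rw [hev 2 (by omega) (by omega) rfl, hev (2 + 2) (by omega) (by omega) rfl]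
          · obtain rfl : m = 2 := by omega
            right
            refine ⟨by omega, fun h => hm0 h.symm, ?_⟩
            intro x h1 h2
            have : x = 1 ∨ x = 2 ∨ x = 3 := by omega
            rcases this with rfl | rfl | rfl
            · simpa using fun h => hm0 h.symm
            · simpa using hm0
            · exact ⟨by simpa using hc, by simpa using hcm⟩
      · -- `m` odd
        left
        have h1' := (hB m hm le_rfl).2 ho
        intro x h1 h2
        rcases Nat.lt_or_ge m x with hx | hx
        · obtain rfl : x = m + 1 := by omega
          have := hmono m 1 hm le_rfl le_rfl
          constructor
          · intro h; exact absurd ⟨h1', h.symm⟩ this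
          · intro h; omega
        · exact hB x h1 hx
    · right
      refine ⟨by omega, h12, ?_⟩
      intro x h1 h2
      rcases Nat.lt_or_ge m x with hx | hx
      swap
      · exact hA x h1 hx
      obtain rfl : x = m + 1 := by omega
      clear h1 h2 hx
      have e2 : 2 + (m - 1) = m + 1 := by omega
      have e3 : 3 + (m - 2) = m + 1 := by omega
      have m1 := hmono 1 m le_rfl hm (by omega)
      have r1 := hrain 1 m le_rfl hm (by omega)
      rw [show 1 + m = m + 1 by omega] at m1 r1
      have m2 := hmono 2 (m - 1) (by omega) (by omega) (by omega)
      have r2 := hrain 2 (m - 1) (by omega) (by omega) (by omega)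
      rw [e2] at m2 r2
      have m3 := hmono 3 (m - 2) (by omega) (by omega) (by omega)
      have r3 := hrain 3 (m - 2) (by omega) (by omega) (by omega)
      rw [e3] at m3 r3
      have c3 : χ 3 = χ 2 := (hA 3 (by omega) h3).2.2 (by omega)
      have a1 := hA m hm le_rfl
      have a2 := hA (m - 1) (by omega) (by omega)
      have a3 := hA (m - 2) (by omega) (by omega)
      have : m % 5 = 0 ∨ m % 5 = 1 ∨ m % 5 = 2 ∨ m % 5 = 3 ∨ m % 5 = 4 := by omega
      rcases this with h | h | h | h | h
      · have q1 : (m - 1) % 5 = 4 := by omega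
        have q : (m + 1) % 5 = 1 := by omega
        simp [h] at a1
        simp [q1] at a2
        simp only [q]
        grind
      · have q1 : (m - 1) % 5 = 0 := by omega
        have q2 : (m - 2) % 5 = 4 := by omega
        have q : (m + 1) % 5 = 2 := by omega
        simp [h] at a1
        simp [q1] at a2
        simp [q2] at a3
        simp only [q]
        grind
      · have hm5 : 5 ≤ m ∨ m = 2 := by omega
        have hm5 : 5 ≤ m := by omega
        have q1 : (m - 1) % 5 = 1 := by omega
        have q3 : (m - 3) % 5 = 4 := by omega
        have q : (m + 1) % 5 = 3 := by omega
        have c4 : χ 4 = χ 1 := (hA 4 (by omega) (by omega)).1.2 (by omega)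
        have a4 := hA (m - 3) (by omega) (by omega)
        have m4 := hmono 4 (m - 3) (by omega) (by omega) (by omega)
        rw [show 4 + (m - 3) = m + 1 by omega] at m4
        simp [h] at a1
        simp [q3] at a4
        simp only [q]
        grind
      · have q1 : (m - 1) % 5 = 2 := by omega
        have q : (m + 1) % 5 = 4 := by omega
        simp [h] at a1
        simp [q1] at a2
        simp only [q]
        grind
      · have q1 : (m - 1) % 5 = 3 := by omega
        have q : (m + 1) % 5 = 0 := by omega
        simp [h] at a1
        simp [q1] at a2
        simp only [q]
        grind

theorem StrongGS.dichotomy {m : ℕ} {C : Finset ℕ} {χ : ℕ → ℕ} (h : StrongGS m C χ)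
    (hm : 1 ≤ m) : StructB m χ ∨ StructA m χ := by
  obtain ⟨-, -, h3, h4⟩ := h
  apply struct_dichotomy χ m hm
  · intro a b ha hb hab
    exact h3 a (by simp; omega) b (by simp; omega) (a + b) (by simp; omega) rfl
  · intro a b ha hb hab
    have := h4 a (by simp; omega) b (by simp; omega) (a + b) (by simp; omega) rfl
    tauto

/-- Restriction to multiples of `d`, when all colors of `D` appear on multiples of `d` only. -/
theorem StrongGS.restrict {m d : ℕ} {C D : Finset ℕ} {χ : ℕ → ℕ} (h : StrongGS m C χ)
    (hd : 0 < d) (hD : D ⊆ C)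
    (hmul : ∀ x, 1 ≤ x → x ≤ m → (χ x ∈ D ↔ d ∣ x)) :
    StrongGS (m / d) D (fun x => χ (d * x)) := by
  obtain ⟨h1, h2, h3, h4⟩ := h
  have key : ∀ x ∈ Finset.Icc 1 (m / d), d * x ∈ Finset.Icc 1 m := by
    intro x hx
    rw [Finset.mem_Icc] at hx ⊢
    refine ⟨Nat.mul_pos hd hx.1, ?_⟩
    calc d * x ≤ d * (m / d) := Nat.mul_le_mul_left _ hx.2
      _ ≤ m := Nat.mul_div_le m d
  refine ⟨?_, ?_, ?_, ?_⟩
  · intro x hx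
    have := key x hx
    rw [Finset.mem_Icc] at this
    exact (hmul _ this.1 this.2).2 ⟨x, rfl⟩
  · intro i hi
    obtain ⟨x, hx, hxi⟩ := h2 i (hD hi)
    rw [Finset.mem_Icc] at hx
    obtain ⟨y, rfl⟩ := (hmul x hx.1 hx.2).1 (hxi ▸ hi)
    refine ⟨y, ?_, hxi⟩
    rw [Finset.mem_Icc]
    refine ⟨Nat.pos_of_ne_zero (by rintro rfl; omega), ?_⟩
    rw [Nat.le_div_iff_mul_le hd, mul_comm]
    exact hx.2
  · intro a ha b hb c hc habc
    exact h3 _ (key a ha) _ (key b hb) _ (key c hc) (by rw [← habc, mul_add])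
  · intro a ha b hb c hc habc
    exact h4 _ (key a ha) _ (key b hb) _ (key c hc) (by rw [← habc, mul_add])

theorem StrongGS.restrictB {m : ℕ} {C : Finset ℕ} {χ : ℕ → ℕ} (h : StrongGS m C χ)
    (hB : StructB m χ) : StrongGS (m / 2) (C \ {χ 1}) (fun x => χ (2 * x)) := by
  refine h.restrict (by norm_num) Finset.sdiff_subset ?_
  intro x h1 h2
  have := hB x h1 h2
  have hC := h.1 x (by simp; omega)
  simp only [Finset.mem_sdiff, hC, Finset.mem_singleton, this, true_and]
  omega

theorem StrongGS.restrictA {m : ℕ} {C : Finset ℕ} {χ : ℕ → ℕ} (h : StrongGS m C χ)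
    (hA : StructA m χ) : StrongGS (m / 5) (C \ {χ 1, χ 2}) (fun x => χ (5 * x)) := by
  refine h.restrict (by norm_num) Finset.sdiff_subset ?_
  intro x h1 h2
  have := hA.2.2 x h1 h2
  have hC := h.1 x (by simp; omega)
  simp only [Finset.mem_sdiff, hC, Finset.mem_singleton, Finset.mem_insert, this.1, this.2, true_and]
  omega

/-- The extremal function (number of vertices). -/
def extF : ℕ → ℕ
  | 0 => 1
  | 1 => 2
  | (k + 2) => 5 * extF k

theorem extF_two_mul (k : ℕ) : 2 * extF k ≤ extF (k + 1) := by
  induction k using Nat.twoStepInduction with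
  | zero => simp [extF]
  | one => simp [extF]
  | more n h1 h2 =>
    have e1 : extF (n + 2) = 5 * extF n := rfl
    have e2 : extF (n + 2 + 1) = 5 * extF (n + 1) := rfl
    omega

theorem extF_pos (k : ℕ) : 1 ≤ extF k := by
  induction k using Nat.twoStepInduction with
  | zero => simp [extF]
  | one => simp [extF]
  | more n h1 h2 =>
    have e1 : extF (n + 2) = 5 * extF n := rfl
    omega

theorem cardB {m : ℕ} {C : Finset ℕ} {χ : ℕ → ℕ} (h : StrongGS m C χ)
    (hm : 1 ≤ m) : (C \ {χ 1}).card + 1 = C.card := by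
  have hC := h.1 1 (by simp; omega)
  rw [Finset.sdiff_singleton_eq_erase]
  exact Finset.card_erase_add_one hC

theorem cardA {m : ℕ} {C : Finset ℕ} {χ : ℕ → ℕ} (h : StrongGS m C χ)
    (hA : StructA m χ) : (C \ {χ 1, χ 2}).card + 2 = C.card := by
  have hC := h.1 1 (by have := hA.1; simp; omega)
  have hC2 := h.1 2 (by have := hA.1; simp; omega)
  have := Finset.card_sdiff_add_card_eq_card (s := {χ 1, χ 2}) (t := C) (by
    intro x hx
    simp only [Finset.mem_insert, Finset.mem_singleton] at hx
    rcases hx with rfl | rfl <;> assumption)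
  rwa [Finset.card_pair hA.2.1] at this

theorem StrongGS.bound (m : ℕ) : ∀ (C : Finset ℕ) (χ : ℕ → ℕ), StrongGS m C χ →
    m + 1 ≤ extF C.card := by
  induction m using Nat.strong_induction_on with
  | _ m ih =>
    intro C χ h
    rcases Nat.eq_zero_or_pos m with rfl | hm
    · exact extF_pos _
    rcases h.dichotomy hm with hB | hA
    · have := ih (m / 2) (by omega) _ _ (h.restrictB hB)
      have h2 := extF_two_mul (C \ {χ 1}).card
      rw [cardB h hm] at h2
      omega
    · have := ih (m / 5) (by omega) _ _ (h.restrictA hA)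
      have h2 : extF ((C \ {χ 1, χ 2}).card + 2) = 5 * extF (C \ {χ 1, χ 2}).card := rfl
      rw [cardA h hA] at h2
      omega

theorem StrongGS.exists_ext (r : ℕ) : ∃ χ, StrongGS (extF r - 1) (Finset.Icc 1 r) χ := by
  induction r using Nat.twoStepInduction with
  | zero => exact ⟨id, by simp [StrongGS, extF]⟩
  | one => exact ⟨fun _ => 1, by simp [StrongGS, extF]⟩
  | more n ih _ =>
    obtain ⟨χ, h1, h2, h3, h4⟩ := ih
    have e1 : extF (n + 2) = 5 * extF n := rfl
    have hp := extF_pos n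
    have hdiv : ∀ x ∈ Finset.Icc 1 (extF (n + 2) - 1), x % 5 = 0 →
        x / 5 ∈ Finset.Icc 1 (extF n - 1) := by
      intro x hx h
      rw [Finset.mem_Icc] at hx ⊢
      omega
    have hran : ∀ x ∈ Finset.Icc 1 (extF (n + 2) - 1), x % 5 = 0 →
        1 ≤ χ (x / 5) ∧ χ (x / 5) ≤ n := by
      intro x hx h
      have := h1 _ (hdiv x hx h)
      rwa [Finset.mem_Icc] at this
    refine ⟨fun x => if x % 5 = 0 then χ (x / 5) else
      if x % 5 = 1 ∨ x % 5 = 4 then n + 1 else n + 2, ?_, ?_, ?_, ?_⟩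
    · intro x hx
      have := hran x hx
      simp only [Finset.mem_Icc]
      split_ifs with h h'
      · have := this h; omega
      · omega
      · omega
    · intro i hi
      rw [Finset.mem_Icc] at hi
      have : i ≤ n ∨ i = n + 1 ∨ i = n + 2 := by omega
      rcases this with h | rfl | rfl
      · obtain ⟨x, hx, rfl⟩ := h2 i (by simp; omega)
        rw [Finset.mem_Icc] at hx
        exact ⟨5 * x, by rw [Finset.mem_Icc]; omega, by simp⟩
      · exact ⟨1, by rw [Finset.mem_Icc]; omega, by simp⟩
      · exact ⟨2, by rw [Finset.mem_Icc]; omega, by simp⟩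
    · intro a ha b hb c hc habc
      have ra := hran a ha
      have rb := hran b hb
      have rc := hran c hc
      by_cases hz : a % 5 = 0 ∧ b % 5 = 0
      · have hcz : c % 5 = 0 := by omega
        simp only [hz.1, hz.2, hcz, if_true]
        exact h3 _ (hdiv a ha hz.1) _ (hdiv b hb hz.2) _ (hdiv c hc hcz) (by omega)
      · rintro ⟨p, q⟩
        dsimp only at p q
        split_ifs at p q <;> omega
    · intro a ha b hb c hc habc
      have ra := hran a ha
      have rb := hran b hb
      have rc := hran c hc
      by_cases hz : a % 5 = 0 ∧ b % 5 = 0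
      · have hcz : c % 5 = 0 := by omega
        simp only [hz.1, hz.2, hcz, if_true]
        exact h4 _ (hdiv a ha hz.1) _ (hdiv b hb hz.2) _ (hdiv c hc hcz) (by omega)
      · rintro ⟨p, q, s⟩
        dsimp only at p q s
        split_ifs at p q s <;> omega

/-- **Structure of maximal strong Gallai–Schur colorings.** Let `r > 3` and let
`χ` be a strong Gallai–Schur `r`-coloring of `[1, m]` that is maximal (no such
coloring of any longer interval exists).  Then exactly one of the following holds:
(a) `m ≡ 4 (mod 5)`, the residues `1, 4` mod `5` form one color class, the
residues `2, 3` mod `5` form another, multiples of `5` get the remaining `r - 2`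
colors, and `x ↦ χ (5 * x)` is a strong Gallai–Schur coloring of `[1, (m-4)/5]`
with those `r - 2` colors; or
(b) `m` is odd, the odd numbers form one color class, even numbers get the
remaining `r - 1` colors, and `x ↦ χ (2 * x)` is a strong Gallai–Schur coloring
of `[1, (m-1)/2]` with those `r - 1` colors. -/
theorem strong_maximal_structure (m r : ℕ) (hr : 3 < r) (χ : ℕ → ℕ)
    (h : StrongGS m (Finset.Icc 1 r) χ)
    (hmax : ∀ m', m < m' → ∀ χ' : ℕ → ℕ, ¬ StrongGS m' (Finset.Icc 1 r) χ') :
    Xor'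
      (m % 5 = 4 ∧
        ∃ c₁ ∈ Finset.Icc 1 r, ∃ c₂ ∈ Finset.Icc 1 r, c₁ ≠ c₂ ∧
          (∀ x ∈ Finset.Icc 1 m, (χ x = c₁ ↔ (x % 5 = 1 ∨ x % 5 = 4))) ∧
          (∀ x ∈ Finset.Icc 1 m, (χ x = c₂ ↔ (x % 5 = 2 ∨ x % 5 = 3))) ∧
          (∀ x ∈ Finset.Icc 1 m, 5 ∣ x → χ x ≠ c₁ ∧ χ x ≠ c₂) ∧
          StrongGS ((m - 4) / 5) (Finset.Icc 1 r \ {c₁, c₂}) (fun x => χ (5 * x)))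
      (Odd m ∧
        ∃ c₁ ∈ Finset.Icc 1 r,
          (∀ x ∈ Finset.Icc 1 m, (χ x = c₁ ↔ Odd x)) ∧
          (∀ x ∈ Finset.Icc 1 m, Even x → χ x ≠ c₁) ∧
          StrongGS ((m - 1) / 2) (Finset.Icc 1 r \ {c₁}) (fun x => χ (2 * x))) := by
  have hm : 1 ≤ m := by
    obtain ⟨x, hx, -⟩ := h.2.1 1 (by simp; omega)
    rw [Finset.mem_Icc] at hx
    omega
  have hcard : (Finset.Icc 1 r).card = r := by simp
  have hlow : extF r ≤ m + 1 := by
    by_contra hlt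
    obtain ⟨χ', h'⟩ := StrongGS.exists_ext r
    exact hmax _ (by omega) χ' h'
  have mem : ∀ x, x ∈ Finset.Icc 1 m ↔ 1 ≤ x ∧ x ≤ m := fun x => Finset.mem_Icc
  have hor := h.dichotomy hm
  apply (xor_iff_or_and_not_and _ _).2
  refine ⟨?_, ?_⟩
  · rcases hor with hB | hA
    · right
      have hR := h.restrictB hB
      have hodd : m % 2 = 1 := by
        have := StrongGS.bound _ _ _ hR
        have h2 := extF_two_mul (Finset.Icc 1 r \ {χ 1}).card
        rw [cardB h hm, hcard] at h2
        omega
      refine ⟨Nat.odd_iff.2 hodd, χ 1, h.1 1 ((mem _).2 ⟨le_rfl, hm⟩), ?_, ?_, ?_⟩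
      · intro x hx
        rw [mem] at hx
        rw [Nat.odd_iff]
        exact hB x hx.1 hx.2
      · intro x hx he hc
        rw [mem] at hx
        have := (hB x hx.1 hx.2).1 hc
        rw [Nat.even_iff] at he
        omega
      · rwa [show (m - 1) / 2 = m / 2 by omega]
    · left
      have hR := h.restrictA hA
      have h5 : m % 5 = 4 := by
        have := StrongGS.bound _ _ _ hR
        have h2 : extF ((Finset.Icc 1 r \ {χ 1, χ 2}).card + 2)
          = 5 * extF (Finset.Icc 1 r \ {χ 1, χ 2}).card := rfl
        rw [cardA h hA, hcard] at h2
        omega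
      obtain ⟨h3, h12, hA⟩ := hA
      refine ⟨h5, χ 1, h.1 1 ((mem _).2 (by omega)), χ 2, h.1 2 ((mem _).2 (by omega)), h12,
        ?_, ?_, ?_, ?_⟩
      · intro x hx
        rw [mem] at hx
        exact (hA x hx.1 hx.2).1
      · intro x hx
        rw [mem] at hx
        exact (hA x hx.1 hx.2).2
      · intro x hx hd
        rw [mem] at hx
        have := hA x hx.1 hx.2
        rw [Ne, Ne, this.1, this.2]
        omega
      · rwa [show (m - 4) / 5 = m / 5 by omega]
  · rintro ⟨⟨h5, c₁, -, c₂, -, -, hA, -⟩, -, c, -, hB, -⟩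
    have a1 := (hA 1 ((mem _).2 (by omega))).2 (by omega)
    have a4 := (hA 4 ((mem _).2 (by omega))).2 (by omega)
    have b1 := (hB 1 ((mem _).2 (by omega))).2 (by decide)
    have b4 := (hB 4 ((mem _).2 (by omega))).1 (by rw [a4, ← a1, b1])
    exact absurd b4 (by decide)
end

section
/- Let r > 3 and let χ be a weak Gallai-Schur r-coloring of [1, m] that is maximal, i.e., no weak Gallai-Schur r-coloring of [1, m'] exists for any m' > m. Then exactly one of the following holds. (a) m ≡ 4 (mod 5); the set of x ∈ [1,m] with x ≡ 1 or 4 (mod 5) is a single color class of χ; the set of x ∈ [1,m] with x ≡ 2 or 3 (mod 5) is a single color class of χ; every multiple of 5 in [1,m] receives one of the remaining r−2 colors, and the induced coloring x ↦ χ(5x) of [1, (m−4)/5] by these r−2 colors is a weak Gallai-Schur (r−2)-coloring. (b) m is odd; the set of odd numbers in [1,m] is a single color class of χ; every even number in [1,m] receives one of the remaining r−1 colors, and the induced coloring x ↦ χ(2x) of [1, (m−1)/2] by these r−1 colors is a weak Gallai-Schur (r−1)-coloring. -/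
theorem ext_one {m : ℕ} {C : Finset ℕ} {χ : ℕ → ℕ} (h : WeakGS m C χ) (c : ℕ) (hc : c ∈ C)
    (h1 : ∀ a b, 1 ≤ a → 1 ≤ b → a + b = m + 1 → ¬ (χ a = χ b ∧ χ b = c))
    (h2 : ∀ a b, 1 ≤ a → 1 ≤ b → a + b = m + 1 → χ a = χ b ∨ χ a = c ∨ χ b = c) :
    WeakGS (m + 1) C (fun x => if x = m + 1 then c else χ x) := by
  obtain ⟨hC, hs, hm, hr⟩ := h
  simp only [Finset.mem_Icc] at *
  refine ⟨?_, ?_, ?_, ?_⟩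
  · intro x hx
    simp only [Finset.mem_Icc] at hx
    by_cases hxm : x = m + 1
    · simp [hxm, hc]
    · simp only [hxm, if_false]
      exact hC x (by omega)
  · intro i hi
    obtain ⟨x, hx, hxi⟩ := hs i hi
    exact ⟨x, by simp only [Finset.mem_Icc]; omega, by simp only [show x ≠ m + 1 by omega, if_false]; exact hxi⟩
  · intro a ha b hb d hd hab n1 n2 n3
    simp only [Finset.mem_Icc] at ha hb hd
    simp only [show a ≠ m + 1 by omega, show b ≠ m + 1 by omega, if_false]
    by_cases hdm : d = m + 1
    · simp only [hdm, if_true]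
      exact h1 a b ha.1 hb.1 (by omega)
    · simp only [hdm, if_false]
      exact hm a (by omega) b (by omega) d (by omega) hab n1 n2 n3
  · intro a ha b hb d hd hab
    simp only [Finset.mem_Icc] at ha hb hd
    simp only [show a ≠ m + 1 by omega, show b ≠ m + 1 by omega, if_false]
    by_cases hdm : d = m + 1
    · simp only [hdm, if_true]
      have := h2 a b ha.1 hb.1 (by omega)
      tauto
    · simp only [hdm, if_false]
      exact hr a (by omega) b (by omega) d (by omega) hab

theorem scale {m k n : ℕ} {C D : Finset ℕ} {χ : ℕ → ℕ} (h : WeakGS m C χ) (hk : 0 < k)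
    (hn : ∀ y, y ≤ n ↔ k * y ≤ m)
    (hD : ∀ x, 1 ≤ x → x ≤ m → (χ x ∈ D ↔ k ∣ x)) (hDC : D ⊆ C) :
    WeakGS n D (fun x => χ (k * x)) := by
  obtain ⟨hC, hs, hm, hr⟩ := h
  have key : ∀ x ∈ Finset.Icc 1 n, k * x ∈ Finset.Icc 1 m := by
    intro x hx
    simp only [Finset.mem_Icc] at *
    exact ⟨Nat.mul_pos hk hx.1, (hn x).1 hx.2⟩
  have inj : ∀ x y, x ≠ y → k * x ≠ k * y := fun x y hxy e => hxy (Nat.eq_of_mul_eq_mul_left hk e)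
  refine ⟨?_, ?_, ?_, ?_⟩
  · intro x hx
    have := key x hx
    rw [Finset.mem_Icc] at this
    exact (hD _ this.1 this.2).2 (dvd_mul_right _ _)
  · intro i hi
    obtain ⟨x, hx, hxi⟩ := hs i (hDC hi)
    rw [Finset.mem_Icc] at hx
    obtain ⟨y, rfl⟩ := (hD x hx.1 hx.2).1 (hxi ▸ hi)
    refine ⟨y, ?_, hxi⟩
    rw [Finset.mem_Icc]
    exact ⟨Nat.pos_of_mul_pos_left hx.1, (hn y).2 hx.2⟩
  · intro a ha b hb d hd hab n1 n2 n3
    exact hm _ (key a ha) _ (key b hb) _ (key d hd) (by rw [← hab, mul_add]) (inj _ _ n1) (inj _ _ n2) (inj _ _ n3)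
  · intro a ha b hb d hd hab
    exact hr _ (key a ha) _ (key b hb) _ (key d hd) (by rw [← hab, mul_add])

theorem other {m r : ℕ} (hr : 3 < r) {χ : ℕ → ℕ} (h : WeakGS m (Finset.Icc 1 r) χ) (R B G : ℕ) :
    ∃ x, 1 ≤ x ∧ x ≤ m ∧ χ x ≠ R ∧ χ x ≠ B ∧ χ x ≠ G := by
  have : ∃ i ∈ Finset.Icc 1 r, i ∉ ({R, B, G} : Finset ℕ) := by
    apply Finset.exists_mem_notMem_of_card_lt_card
    have := Finset.card_le_three (a := R) (b := B) (c := G)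
    simp only [Nat.card_Icc]
    omega
  obtain ⟨i, hi, hn⟩ := this
  obtain ⟨x, hx, rfl⟩ := h.2.1 i hi
  simp at hn hx
  exact ⟨x, hx.1, hx.2, by tauto⟩

/-- The initial segment up to the first occurrence of a third color. -/
theorem initial {m r : ℕ} (hr : 3 < r) {χ : ℕ → ℕ} (h : WeakGS m (Finset.Icc 1 r) χ)
    (hmono : ∀ a b, 1 ≤ a → 1 ≤ b → a ≠ b → a + b ≤ m → ¬ (χ a = χ b ∧ χ b = χ (a + b)))
    (hrain : ∀ a b, 1 ≤ a → 1 ≤ b → a + b ≤ m →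
      χ a = χ b ∨ χ a = χ (a + b) ∨ χ b = χ (a + b)) :
    4 ≤ m ∧ χ 2 ≠ χ 1 ∧
    ((χ 3 = χ 1 ∧ χ 4 ≠ χ 1 ∧ χ 4 ≠ χ 2) ∨
     (χ 3 = χ 1 ∧ χ 4 = χ 2 ∧ χ 5 = χ 1 ∧ 6 ≤ m ∧ χ 6 ≠ χ 1 ∧ χ 6 ≠ χ 2) ∨
     (χ 3 = χ 2 ∧ χ 4 = χ 1 ∧ 5 ≤ m ∧ χ 5 ≠ χ 1 ∧ χ 5 ≠ χ 2)) := by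
  -- minimal third color
  have third : ∀ R B, ∃ s, 1 ≤ s ∧ s ≤ m ∧ χ s ≠ R ∧ χ s ≠ B ∧
      (∀ x, 1 ≤ x → x < s → χ x = R ∨ χ x = B) ∧
      (∀ x y, 1 ≤ x → 1 ≤ y → x + y = s → χ x = χ y) := by
    intro R B
    have hex : ∃ s, 1 ≤ s ∧ s ≤ m ∧ χ s ≠ R ∧ χ s ≠ B := by
      obtain ⟨x, h1, h2, h3, h4, -⟩ := other hr h R B B
      exact ⟨x, h1, h2, h3, h4⟩
    classical
    have hspec := Nat.find_spec hex
    have hmin : ∀ x, 1 ≤ x → x < Nat.find hex → χ x = R ∨ χ x = B := by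
      intro x hx hlt
      have := Nat.find_min hex hlt
      by_contra hcon
      push Not at hcon
      exact this ⟨hx, by omega, hcon.1, hcon.2⟩
    refine ⟨Nat.find hex, hspec.1, hspec.2.1, hspec.2.2.1, hspec.2.2.2, hmin, ?_⟩
    intro x y hx hy hxy
    have a1 := hmin x hx (by omega)
    have a2 := hmin y hy (by omega)
    have a3 := hrain x y hx hy (by omega)
    rw [hxy] at a3
    have := hspec.2.2
    grind
  by_cases h21 : χ 2 = χ 1
  · exfalso
    obtain ⟨s, s1, sm, sR, sB, smin, pal⟩ := third (χ 1) (χ 3)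
    have : s ≠ 1 := by rintro rfl; exact sR rfl
    have : s ≠ 2 := by rintro rfl; exact sR h21
    have : s ≠ 3 := by rintro rfl; exact sB rfl
    have p1 := pal 1 (s - 1) le_rfl (by omega) (by omega)
    have p2 := pal 2 (s - 2) (by omega) (by omega) (by omega)
    by_cases h4 : s = 4
    · subst h4
      have := hmono 1 2 (by omega) (by omega) (by omega) (by omega)
      simp at p1 this
      grind
    · have := hmono 1 (s - 2) (by omega) (by omega) (by omega) (by omega)
      rw [show 1 + (s - 2) = s - 1 by omega] at this
      grind
  · obtain ⟨s, s1, sm, sR, sB, smin, pal⟩ := third (χ 1) (χ 2)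
    have e1 : s ≠ 1 := by rintro rfl; exact sR rfl
    have e2 : s ≠ 2 := by rintro rfl; exact sB rfl
    have e3 : s ≠ 3 := by
      rintro rfl
      exact h21 (pal 1 2 (by omega) (by omega) (by omega)).symm
    refine ⟨by omega, h21, ?_⟩
    have M := fun a b (ha : 1 ≤ a) (hb : 1 ≤ b) (hn : a ≠ b) (hl : a + b < s) =>
      hmono a b ha hb hn (by omega)
    by_cases h10 : 10 ≤ s
    · exfalso
      have c3 := smin 3 (by omega) (by omega)
      have c4 := smin 4 (by omega) (by omega)
      have c5 := smin 5 (by omega) (by omega)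
      have c6 := smin 6 (by omega) (by omega)
      have c7 := smin 7 (by omega) (by omega)
      have c8 := smin 8 (by omega) (by omega)
      have c9 := smin 9 (by omega) (by omega)
      have m12 := M 1 2 (by omega) (by omega) (by omega) (by omega)
      have m13 := M 1 3 (by omega) (by omega) (by omega) (by omega)
      have m14 := M 1 4 (by omega) (by omega) (by omega) (by omega)
      have m15 := M 1 5 (by omega) (by omega) (by omega) (by omega)
      have m16 := M 1 6 (by omega) (by omega) (by omega) (by omega)
      have m17 := M 1 7 (by omega) (by omega) (by omega) (by omega)
      have m18 := M 1 8 (by omega) (by omega) (by omega) (by omega)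
      have m23 := M 2 3 (by omega) (by omega) (by omega) (by omega)
      have m24 := M 2 4 (by omega) (by omega) (by omega) (by omega)
      have m25 := M 2 5 (by omega) (by omega) (by omega) (by omega)
      have m26 := M 2 6 (by omega) (by omega) (by omega) (by omega)
      have m27 := M 2 7 (by omega) (by omega) (by omega) (by omega)
      have m34 := M 3 4 (by omega) (by omega) (by omega) (by omega)
      have m35 := M 3 5 (by omega) (by omega) (by omega) (by omega)
      have m36 := M 3 6 (by omega) (by omega) (by omega) (by omega)
      have m45 := M 4 5 (by omega) (by omega) (by omega) (by omega)
      norm_num at m12 m13 m14 m15 m16 m17 m18 m23 m24 m25 m26 m27 m34 m35 m36 m45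
      clear M pal smin third hmono hrain hr h
      grind
    · have hs : s = 4 ∨ s = 5 ∨ s = 6 ∨ s = 7 ∨ s = 8 ∨ s = 9 := by omega
      rcases hs with rfl | rfl | rfl | rfl | rfl | rfl
      · have := pal 1 3 (by omega) (by omega) (by omega)
        exact Or.inl ⟨this.symm, sR, sB⟩
      · have p1 := pal 1 4 (by omega) (by omega) (by omega)
        have p2 := pal 2 3 (by omega) (by omega) (by omega)
        exact Or.inr (Or.inr ⟨p2.symm, p1.symm, sm, sR, sB⟩)
      · have p1 := pal 1 5 (by omega) (by omega) (by omega)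
        have p2 := pal 2 4 (by omega) (by omega) (by omega)
        rcases smin 3 (by omega) (by omega) with c3 | c3
        · exact Or.inr (Or.inl ⟨c3, p2.symm, p1.symm, sm, sR, sB⟩)
        · exfalso
          obtain ⟨t, t1, tm, tR, tB, tG⟩ := other hr h (χ 1) (χ 2) (χ 6)
          have t7 : 7 ≤ t := by
            by_contra hlt
            have : t = 6 ∨ t < 6 := by omega
            rcases this with rfl | hlt
            · exact tG rfl
            · have := smin t t1 hlt
              tauto
          have r25 := hrain 2 5 (by omega) (by omega) (by omega)
          have m34 := hmono 3 4 (by omega) (by omega) (by omega) (by omega)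
          norm_num at r25 m34
          have c7 : χ 7 = χ 1 := by clear M pal smin third hmono hrain; grind
          have t8 : 8 ≤ t := by
            have : t ≠ 7 := by rintro rfl; exact tR c7
            omega
          have r26 := hrain 2 6 (by omega) (by omega) (by omega)
          have m17 := hmono 1 7 (by omega) (by omega) (by omega) (by omega)
          have r35 := hrain 3 5 (by omega) (by omega) (by omega)
          norm_num at r26 m17 r35
          have c8 : χ 8 = χ 2 := by clear M pal smin third hmono hrain; grind
          have t9 : 9 ≤ t := by
            have : t ≠ 8 := by rintro rfl; exact tB c8
            omega
          have r27 := hrain 2 7 (by omega) (by omega) (by omega)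
          have r36 := hrain 3 6 (by omega) (by omega) (by omega)
          norm_num at r27 r36
          have c9 : χ 9 = χ 2 := by clear M pal smin third hmono hrain; grind
          have t10 : 10 ≤ t := by
            have : t ≠ 9 := by rintro rfl; exact tB c9
            omega
          have r19 := hrain 1 9 (by omega) (by omega) (by omega)
          have m28 := hmono 2 8 (by omega) (by omega) (by omega) (by omega)
          have r46 := hrain 4 6 (by omega) (by omega) (by omega)
          norm_num at r19 m28 r46
          clear M pal smin third hmono hrain
          grind
      · exfalso
        have p1 := pal 1 6 (by omega) (by omega) (by omega)
        have p2 := pal 2 5 (by omega) (by omega) (by omega)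
        have p3 := pal 3 4 (by omega) (by omega) (by omega)
        have c3 := smin 3 (by omega) (by omega)
        have m23 := M 2 3 (by omega) (by omega) (by omega) (by omega)
        have m13 := M 1 3 (by omega) (by omega) (by omega) (by omega)
        norm_num at m23 m13
        clear M pal smin third hmono hrain
        grind
      · exfalso
        have p1 := pal 1 7 (by omega) (by omega) (by omega)
        have p2 := pal 2 6 (by omega) (by omega) (by omega)
        have p3 := pal 3 5 (by omega) (by omega) (by omega)
        have c3 := smin 3 (by omega) (by omega)
        have c4 := smin 4 (by omega) (by omega)
        have m23 := M 2 3 (by omega) (by omega) (by omega) (by omega)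
        have m13 := M 1 3 (by omega) (by omega) (by omega) (by omega)
        have m24 := M 2 4 (by omega) (by omega) (by omega) (by omega)
        norm_num at m23 m13 m24
        clear M pal smin third hmono hrain
        grind
      · exfalso
        have p1 := pal 1 8 (by omega) (by omega) (by omega)
        have p2 := pal 2 7 (by omega) (by omega) (by omega)
        have p4 := pal 4 5 (by omega) (by omega) (by omega)
        have c4 := smin 4 (by omega) (by omega)
        have m14 := M 1 4 (by omega) (by omega) (by omega) (by omega)
        have m25 := M 2 5 (by omega) (by omega) (by omega) (by omega)
        norm_num at m14 m25
        clear M pal smin third hmono hrain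
        grind

theorem caseB {m g : ℕ} {χ : ℕ → ℕ}
    (hmono : ∀ a b, 1 ≤ a → 1 ≤ b → a ≠ b → a + b ≤ m → ¬ (χ a = χ b ∧ χ b = χ (a + b)))
    (hrain : ∀ a b, 1 ≤ a → 1 ≤ b → a + b ≤ m →
      χ a = χ b ∨ χ a = χ (a + b) ∨ χ b = χ (a + b))
    (h2 : χ 2 ≠ χ 1) (hg : g % 2 = 0) (hg1 : χ g ≠ χ 1) (hg2 : χ g ≠ χ 2) (hgp : 1 ≤ g)
    (hsmall : ∀ x, 1 ≤ x → x < g → (χ x = χ 1 ↔ x % 2 = 1)) :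
    ∀ x, 1 ≤ x → x ≤ m → (χ x = χ 1 ↔ x % 2 = 1) := by
  intro x
  induction x using Nat.strong_induction_on with
  | _ x ih =>
    intro h1 hm
    rcases lt_trichotomy x g with hx | hx | hx
    · exact hsmall x h1 hx
    · subst hx
      exact ⟨fun e => absurd e hg1, fun e => by omega⟩
    · rcases Nat.mod_two_eq_zero_or_one x with p | p
      · have i := (ih (x - 1) (by omega) (by omega) (by omega)).2 (by omega)
        by_cases hx2 : x = 2
        · subst hx2; simp [h2]
        have := hmono 1 (x - 1) le_rfl (by omega) (by omega) (by omega)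
        rw [show 1 + (x - 1) = x by omega] at this
        grind
      · by_cases hx1 : x = 1
        · subst hx1; simp
        have i2 := (ih (x - 2) (by omega) (by omega) (by omega)).2 (by omega)
        have ig := (ih (x - g) (by omega) (by omega) (by omega)).2 (by omega)
        have r2 := hrain 2 (x - 2) (by omega) (by omega) (by omega)
        have rg := hrain g (x - g) (by omega) (by omega) (by omega)
        rw [show 2 + (x - 2) = x by omega] at r2
        rw [show g + (x - g) = x by omega] at rg
        grind

theorem caseA {m : ℕ} {χ : ℕ → ℕ}
    (hmono : ∀ a b, 1 ≤ a → 1 ≤ b → a ≠ b → a + b ≤ m → ¬ (χ a = χ b ∧ χ b = χ (a + b)))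
    (hrain : ∀ a b, 1 ≤ a → 1 ≤ b → a + b ≤ m →
      χ a = χ b ∨ χ a = χ (a + b) ∨ χ b = χ (a + b))
    (h2 : χ 2 ≠ χ 1) (h3 : χ 3 = χ 2) (h4 : χ 4 = χ 1) (h51 : χ 5 ≠ χ 1) (h52 : χ 5 ≠ χ 2) :
    ∀ x, 1 ≤ x → x ≤ m → ((x % 5 = 1 ∨ x % 5 = 4) ∧ χ x = χ 1) ∨
      ((x % 5 = 2 ∨ x % 5 = 3) ∧ χ x = χ 2) ∨ (x % 5 = 0 ∧ χ x ≠ χ 1 ∧ χ x ≠ χ 2) := by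
  intro x
  induction x using Nat.strong_induction_on with
  | _ x ih =>
    intro h1 hm
    by_cases hx : x ≤ 5
    · interval_cases x <;> simp [*]
    have step : ∀ k, 1 ≤ k → k ≤ 5 →
        ((χ k = χ (x - k) ∨ χ k = χ x ∨ χ (x - k) = χ x) ∧
          ¬ (k < x - k ∧ χ k = χ (x - k) ∧ χ (x - k) = χ x)) := by
      intro k hk hk5
      have r := hrain k (x - k) hk (by omega) (by omega)
      rw [show k + (x - k) = x by omega] at r
      refine ⟨r, fun hh => ?_⟩
      have mm := hmono k (x - k) hk (by omega) (by omega) (by omega)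
      rw [show k + (x - k) = x by omega] at mm
      exact mm hh.2
    have ih' : ∀ k, 1 ≤ k → k ≤ 5 → _ := fun k hk hk5 => ih (x - k) (by omega) (by omega) (by omega)
    have i1 := ih' 1 (by omega) (by omega)
    have i2 := ih' 2 (by omega) (by omega)
    have i3 := ih' 3 (by omega) (by omega)
    have i5 := ih' 5 (by omega) (by omega)
    obtain ⟨r1, m1⟩ := step 1 (by omega) (by omega)
    obtain ⟨r2, m2⟩ := step 2 (by omega) (by omega)
    obtain ⟨r3, m3⟩ := step 3 (by omega) (by omega)
    obtain ⟨r5, m5⟩ := step 5 (by omega) (by omega)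
    clear ih ih' step hmono hrain
    have hmod : x % 5 = 0 ∨ x % 5 = 1 ∨ x % 5 = 2 ∨ x % 5 = 3 ∨ x % 5 = 4 := by omega
    rcases hmod with p | p | p | p | p
    · have j1 : χ (x - 1) = χ 1 := by
        rcases i1 with i | i | i
        · exact i.2
        · omega
        · omega
      have j2 : χ (x - 2) = χ 2 := by
        rcases i2 with i | i | i
        · omega
        · exact i.2
        · omega
      refine Or.inr (Or.inr ⟨p, ?_, ?_⟩)
      · intro e; exact m1 ⟨by omega, j1.symm, by rw [j1, e]⟩
      · intro e; exact m2 ⟨by omega, j2.symm, by rw [j2, e]⟩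
    · have j5 : χ (x - 5) = χ 1 := by
        rcases i5 with i | i | i
        · exact i.2
        · omega
        · omega
      have j2 : χ (x - 2) = χ 1 := by
        rcases i2 with i | i | i
        · exact i.2
        · omega
        · omega
      refine Or.inl ⟨Or.inl p, ?_⟩
      grind
    · have j5 : χ (x - 5) = χ 2 := by
        rcases i5 with i | i | i
        · omega
        · exact i.2
        · omega
      have j3 : χ (x - 3) = χ 1 := by
        rcases i3 with i | i | i
        · exact i.2
        · omega
        · omega
      refine Or.inr (Or.inl ⟨Or.inl p, ?_⟩)
      grind
    · have j5 : χ (x - 5) = χ 2 := by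
        rcases i5 with i | i | i
        · omega
        · exact i.2
        · omega
      have j1 : χ (x - 1) = χ 2 := by
        rcases i1 with i | i | i
        · omega
        · exact i.2
        · omega
      refine Or.inr (Or.inl ⟨Or.inr p, ?_⟩)
      grind
    · have j5 : χ (x - 5) = χ 1 := by
        rcases i5 with i | i | i
        · exact i.2
        · omega
        · omega
      have j1 : χ (x - 1) = χ 2 := by
        rcases i1 with i | i | i
        · omega
        · exact i.2
        · omega
      refine Or.inl ⟨Or.inr p, ?_⟩
      grind

/-- **Structure of maximal weak Gallai–Schur colorings.** Let `r > 3` and let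
`χ` be a weak Gallai–Schur `r`-coloring of `[1, m]` that is maximal (no such
coloring of any longer interval exists).  Then exactly one of the following holds:
(a) `m ≡ 4 (mod 5)`, the residues `1, 4` mod `5` form one color class, the
residues `2, 3` mod `5` form another, multiples of `5` get the remaining `r - 2`
colors, and `x ↦ χ (5 * x)` is a weak Gallai–Schur coloring of `[1, (m-4)/5]`
with those `r - 2` colors; or
(b) `m` is odd, the odd numbers form one color class, even numbers get the
remaining `r - 1` colors, and `x ↦ χ (2 * x)` is a weak Gallai–Schur coloring
of `[1, (m-1)/2]` with those `r - 1` colors. -/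
theorem weak_maximal_structure (m r : ℕ) (hr : 3 < r) (χ : ℕ → ℕ)
    (h : WeakGS m (Finset.Icc 1 r) χ)
    (hmax : ∀ m', m < m' → ∀ χ' : ℕ → ℕ, ¬ WeakGS m' (Finset.Icc 1 r) χ') :
    Xor'
      (m % 5 = 4 ∧
        ∃ c₁ ∈ Finset.Icc 1 r, ∃ c₂ ∈ Finset.Icc 1 r, c₁ ≠ c₂ ∧
          (∀ x ∈ Finset.Icc 1 m, (χ x = c₁ ↔ (x % 5 = 1 ∨ x % 5 = 4))) ∧
          (∀ x ∈ Finset.Icc 1 m, (χ x = c₂ ↔ (x % 5 = 2 ∨ x % 5 = 3))) ∧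
          (∀ x ∈ Finset.Icc 1 m, 5 ∣ x → χ x ≠ c₁ ∧ χ x ≠ c₂) ∧
          WeakGS ((m - 4) / 5) (Finset.Icc 1 r \ {c₁, c₂}) (fun x => χ (5 * x)))
      (Odd m ∧
        ∃ c₁ ∈ Finset.Icc 1 r,
          (∀ x ∈ Finset.Icc 1 m, (χ x = c₁ ↔ Odd x)) ∧
          (∀ x ∈ Finset.Icc 1 m, Even x → χ x ≠ c₁) ∧
          WeakGS ((m - 1) / 2) (Finset.Icc 1 r \ {c₁}) (fun x => χ (2 * x))) := by
  have hmono : ∀ a b, 1 ≤ a → 1 ≤ b → a ≠ b → a + b ≤ m →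
      ¬ (χ a = χ b ∧ χ b = χ (a + b)) := by
    intro a b ha hb hab hm
    exact h.2.2.1 a (Finset.mem_Icc.2 (by omega)) b (Finset.mem_Icc.2 (by omega)) (a + b)
      (Finset.mem_Icc.2 (by omega)) rfl hab (by omega) (by omega)
  have hrain : ∀ a b, 1 ≤ a → 1 ≤ b → a + b ≤ m →
      χ a = χ b ∨ χ a = χ (a + b) ∨ χ b = χ (a + b) := by
    intro a b ha hb hm
    have := h.2.2.2 a (Finset.mem_Icc.2 (by omega)) b (Finset.mem_Icc.2 (by omega)) (a + b)
      (Finset.mem_Icc.2 (by omega)) rfl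
    tauto
  have hcol : ∀ x, 1 ≤ x → x ≤ m → χ x ∈ Finset.Icc 1 r := fun x h1 h2 =>
    h.1 x (Finset.mem_Icc.2 ⟨h1, h2⟩)
  obtain ⟨hm4, h21, hcases⟩ := initial hr h hmono hrain
  have m1 : 1 ∈ Finset.Icc 1 m := Finset.mem_Icc.2 (by omega)
  have m3 : 3 ∈ Finset.Icc 1 m := Finset.mem_Icc.2 (by omega)
  have hB : (∀ x, 1 ≤ x → x ≤ m → (χ x = χ 1 ↔ x % 2 = 1)) ∨
      (χ 3 = χ 2 ∧ χ 4 = χ 1 ∧ 5 ≤ m ∧ χ 5 ≠ χ 1 ∧ χ 5 ≠ χ 2) := by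
    rcases hcases with ⟨c3, c4, c5⟩ | ⟨c3, c4, c5, -, c6, c7⟩ | hc
    · left
      refine caseB (g := 4) hmono hrain h21 (by omega) c4 c5 (by omega) ?_
      intro x hx hx'
      interval_cases x <;> simp [*]
    · left
      refine caseB (g := 6) hmono hrain h21 (by omega) c6 c7 (by omega) ?_
      intro x hx hx'
      interval_cases x <;> simp [*]
    · exact Or.inr hc
  rcases hB with hB | ⟨c3, c4, hm5, c5, c6⟩
  · right
    have hodd : m % 2 = 1 := by
      by_contra hne
      refine hmax (m + 1) (by omega) _ (ext_one h (χ 1) (hcol 1 le_rfl (by omega)) ?_ ?_)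
      · intro a b ha hb hab hc
        have ea := hB a ha (by omega)
        have eb := hB b hb (by omega)
        have e1 := eb.1 hc.2
        have e2 := ea.1 (hc.1.trans hc.2)
        omega
      · intro a b ha hb hab
        have ea := hB a ha (by omega)
        have eb := hB b hb (by omega)
        rcases Nat.mod_two_eq_zero_or_one a with p | p
        · exact Or.inr (Or.inr (eb.2 (by omega)))
        · exact Or.inr (Or.inl (ea.2 p))
    refine ⟨⟨Nat.odd_iff.2 hodd, χ 1, hcol 1 le_rfl (by omega), ?_, ?_, ?_⟩, ?_⟩
    · intro x hx
      rw [Finset.mem_Icc] at hx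
      rw [Nat.odd_iff]
      exact hB x hx.1 hx.2
    · intro x hx he hc
      rw [Finset.mem_Icc] at hx
      have := (hB x hx.1 hx.2).1 hc
      rw [Nat.even_iff] at he
      omega
    · refine scale h (by omega) (by intro y; omega) ?_ Finset.sdiff_subset
      intro x hx1 hx2
      have e := hB x hx1 hx2
      simp only [Finset.mem_sdiff, Finset.mem_singleton, hcol x hx1 hx2, true_and, e]
      omega
    · rintro ⟨-, d1, -, d2, -, hne, f1, f2, -⟩
      have g1 := (f1 1 m1).2 (by norm_num)
      have g3 := (f2 3 m3).2 (by norm_num)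
      have := (hB 3 (by omega) (by omega)).2 (by norm_num)
      exact hne (by rw [← g1, ← g3, this])
  · left
    have hA := caseA hmono hrain h21 c3 c4 c5 c6
    have i1 : ∀ x, 1 ≤ x → x ≤ m → (χ x = χ 1 ↔ (x % 5 = 1 ∨ x % 5 = 4)) := by
      intro x h1 h2
      rcases hA x h1 h2 with ⟨p, e⟩ | ⟨p, e⟩ | ⟨p, e, -⟩
      · simp [p, e]
      · rw [e]; exact ⟨fun q => absurd q h21, fun q => by omega⟩
      · exact ⟨fun q => absurd q e, fun q => by omega⟩
    have i2 : ∀ x, 1 ≤ x → x ≤ m → (χ x = χ 2 ↔ (x % 5 = 2 ∨ x % 5 = 3)) := by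
      intro x h1 h2
      rcases hA x h1 h2 with ⟨p, e⟩ | ⟨p, e⟩ | ⟨p, -, e⟩
      · rw [e]; exact ⟨fun q => absurd q.symm h21, fun q => by omega⟩
      · simp [p, e]
      · exact ⟨fun q => absurd q e, fun q => by omega⟩
    have hmod : m % 5 = 4 := by
      by_contra hne
      by_cases hp : m % 5 = 0 ∨ m % 5 = 3
      · refine hmax (m + 1) (by omega) _ (ext_one h (χ 1) (hcol 1 le_rfl (by omega)) ?_ ?_)
        · intro a b ha hb hab hc
          have e1 := (i1 b hb (by omega)).1 hc.2
          have e2 := (i1 a ha (by omega)).1 (hc.1.trans hc.2)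
          omega
        · intro a b ha hb hab
          rcases hA a ha (by omega) with ⟨p, e⟩ | ⟨p, e⟩ | ⟨p, e, e'⟩
          · exact Or.inr (Or.inl e)
          · by_cases q : b % 5 = 1 ∨ b % 5 = 4
            · exact Or.inr (Or.inr ((i1 b hb (by omega)).2 q))
            · exact Or.inl (by rw [e, (i2 b hb (by omega)).2 (by omega)])
          · exact Or.inr (Or.inr ((i1 b hb (by omega)).2 (by omega)))
      · refine hmax (m + 1) (by omega) _ (ext_one h (χ 2) (hcol 2 (by omega) (by omega)) ?_ ?_)
        · intro a b ha hb hab hc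
          have e1 := (i2 b hb (by omega)).1 hc.2
          have e2 := (i2 a ha (by omega)).1 (hc.1.trans hc.2)
          omega
        · intro a b ha hb hab
          rcases hA a ha (by omega) with ⟨p, e⟩ | ⟨p, e⟩ | ⟨p, e, e'⟩
          · by_cases q : b % 5 = 2 ∨ b % 5 = 3
            · exact Or.inr (Or.inr ((i2 b hb (by omega)).2 q))
            · exact Or.inl (by rw [e, (i1 b hb (by omega)).2 (by omega)])
          · exact Or.inr (Or.inl e)
          · exact Or.inr (Or.inr ((i2 b hb (by omega)).2 (by omega)))
    refine ⟨⟨hmod, χ 1, hcol 1 le_rfl (by omega), χ 2, hcol 2 (by omega) (by omega),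
      fun e => h21 e.symm, ?_, ?_, ?_, ?_⟩, ?_⟩
    · intro x hx
      rw [Finset.mem_Icc] at hx
      exact i1 x hx.1 hx.2
    · intro x hx
      rw [Finset.mem_Icc] at hx
      exact i2 x hx.1 hx.2
    · intro x hx hd
      rw [Finset.mem_Icc] at hx
      rw [Ne, Ne, i1 x hx.1 hx.2, i2 x hx.1 hx.2]
      omega
    · refine scale h (by omega) (by intro y; omega) ?_ Finset.sdiff_subset
      intro x hx1 hx2
      simp only [Finset.mem_sdiff, Finset.mem_insert, Finset.mem_singleton, hcol x hx1 hx2,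
        true_and, i1 x hx1 hx2, i2 x hx1 hx2]
      omega
    · rintro ⟨-, d, -, f, -⟩
      have g1 := (f 1 m1).2 (by decide)
      have g3 := (f 3 m3).2 (by decide)
      exact h21 (by rw [← c3, g3, g1])
end

section
/- Let r > 3 and let χ be a strong Gallai-Schur r-coloring of [1, m] with χ(3) = χ(2). Then for every t ≥ 0: whenever the relevant integer lies in [1, m], one has χ(5t+1) = χ(5t+4) = χ(1), χ(5t+2) = χ(5t+3) = χ(2), and χ(5t+5) ∉ {χ(1), χ(2)}. -/
/-- Let `r > 3` and let `χ` be a strong Gallai–Schur `r`-coloring of `[1, m]`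
with `χ 3 = χ 2`.  Then for every `t ≥ 0`, whenever the relevant integer lies
in `[1, m]`: `χ (5t+1) = χ (5t+4) = χ 1`, `χ (5t+2) = χ (5t+3) = χ 2`, and
`χ (5t+5) ∉ {χ 1, χ 2}`. -/
theorem strong_period_five (m r : ℕ) (hr : 3 < r) (χ : ℕ → ℕ)
    (h : StrongGS m (Finset.Icc 1 r) χ) (h32 : χ 3 = χ 2) :
    ∀ t : ℕ,
      (5 * t + 1 ≤ m → χ (5 * t + 1) = χ 1) ∧
      (5 * t + 4 ≤ m → χ (5 * t + 4) = χ 1) ∧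
      (5 * t + 2 ≤ m → χ (5 * t + 2) = χ 2) ∧
      (5 * t + 3 ≤ m → χ (5 * t + 3) = χ 2) ∧
      (5 * t + 5 ≤ m → χ (5 * t + 5) ≠ χ 1 ∧ χ (5 * t + 5) ≠ χ 2) := by
  obtain ⟨-, -, hm, hg⟩ := h
  have mono : ∀ a b, 1 ≤ a → 1 ≤ b → a + b ≤ m → χ a = χ b → χ (a + b) ≠ χ a := by
    intro a b ha hb hab e1 e2
    exact hm a (Finset.mem_Icc.2 ⟨ha, by omega⟩) b (Finset.mem_Icc.2 ⟨hb, by omega⟩) (a + b)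
      (Finset.mem_Icc.2 ⟨by omega, hab⟩) rfl ⟨e1, by rw [e2, e1]⟩
  have rain : ∀ a b, 1 ≤ a → 1 ≤ b → a + b ≤ m → χ a ≠ χ b →
      χ (a + b) = χ a ∨ χ (a + b) = χ b := by
    intro a b ha hb hab e1
    by_contra hcon
    push Not at hcon
    exact hg a (Finset.mem_Icc.2 ⟨ha, by omega⟩) b (Finset.mem_Icc.2 ⟨hb, by omega⟩) (a + b)
      (Finset.mem_Icc.2 ⟨by omega, hab⟩) rfl ⟨e1, hcon.1.symm, hcon.2.symm⟩
  clear hm hg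
  have h12 : 2 ≤ m → χ 2 ≠ χ 1 := fun h => mono 1 1 le_rfl le_rfl h rfl
  intro t
  induction t with
  | zero =>
    have h4 : 4 ≤ m → χ 4 = χ 1 := by
      intro h
      have := mono 2 2 (by omega) (by omega) h rfl
      have := rain 1 3 (by omega) (by omega) h (by rw [h32]; exact (h12 (by omega)).symm)
      simp only [Nat.reduceAdd] at *
      grind
    refine ⟨fun _ => rfl, h4, fun _ => rfl, fun _ => h32, fun h => ⟨?_, ?_⟩⟩
    · exact mono 1 4 (by omega) (by omega) h (h4 (by omega)).symm
    · exact mono 2 3 (by omega) (by omega) h h32.symm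
  | succ t ih =>
    obtain ⟨-, i4, -, i3, i5⟩ := ih
    have h4 : 4 ≤ m → χ 4 = χ 1 := by
      intro h
      have := mono 2 2 (by omega) (by omega) h rfl
      have := rain 1 3 (by omega) (by omega) h (by rw [h32]; exact (h12 (by omega)).symm)
      simp only [Nat.reduceAdd] at *
      grind
    have j1 : 5 * t + 6 ≤ m → χ (5 * t + 6) = χ 1 := by
      intro h
      have := rain (5 * t + 5) 1 (by omega) (by omega) h
      have := rain (5 * t + 4) 2 (by omega) (by omega) h
      have := h12 (by omega)
      have := i4 (by omega)
      have := i5 (by omega)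
      simp only [Nat.add_assoc, Nat.reduceAdd] at *
      grind
    have j2 : 5 * t + 7 ≤ m → χ (5 * t + 7) = χ 2 := by
      intro h
      have := rain (5 * t + 5) 2 (by omega) (by omega) h
      have := rain (5 * t + 3) 4 (by omega) (by omega) h
      have := mono (5 * t + 6) 1 (by omega) (by omega) h
      have := h12 (by omega)
      have := h4 (by omega)
      have := i3 (by omega)
      have := i5 (by omega)
      have := j1 (by omega)
      simp only [Nat.add_assoc, Nat.reduceAdd] at *
      grind
    have j3 : 5 * t + 8 ≤ m → χ (5 * t + 8) = χ 2 := by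
      intro h
      have := rain (5 * t + 5) 3 (by omega) (by omega) h
      have := rain (5 * t + 6) 2 (by omega) (by omega) h
      have := h12 (by omega)
      have := i5 (by omega)
      have := j1 (by omega)
      simp only [Nat.add_assoc, Nat.reduceAdd] at *
      grind
    have j4 : 5 * t + 9 ≤ m → χ (5 * t + 9) = χ 1 := by
      intro h
      have := rain (5 * t + 5) 4 (by omega) (by omega) h
      have := rain (5 * t + 8) 1 (by omega) (by omega) h
      have := h12 (by omega)
      have := h4 (by omega)
      have := i5 (by omega)
      have := j3 (by omega)
      simp only [Nat.add_assoc, Nat.reduceAdd] at *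
      grind
    refine ⟨j1, j4, j2, j3, fun h => ⟨?_, ?_⟩⟩
    · have e := j4 (by omega)
      have := mono (5 * t + 9) 1 (by omega) (by omega) h e
      rw [e] at this
      exact this
    · have e := j3 (by omega)
      have := mono (5 * t + 8) 2 (by omega) (by omega) h e
      rw [e] at this
      exact this
end

section
/- Let r > 3 and let χ be a strong Gallai-Schur r-coloring of [1, m] with m ≥ 3 and χ(3) = χ(1). Then every odd x ∈ [1, m] satisfies χ(x) = χ(1), and every even x ∈ [1, m] satisfies χ(x) ≠ χ(1). -/
/-- Let `r > 3` and let `χ` be a strong Gallai–Schur `r`-coloring of `[1, m]`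
with `m ≥ 3` and `χ 3 = χ 1`.  Then every odd `x ∈ [1, m]` satisfies
`χ x = χ 1`, and every even `x ∈ [1, m]` satisfies `χ x ≠ χ 1`. -/
theorem strong_period_two (m r : ℕ) (hr : 3 < r) (hm : 3 ≤ m) (χ : ℕ → ℕ)
    (h : StrongGS m (Finset.Icc 1 r) χ) (h31 : χ 3 = χ 1) :
    ∀ x ∈ Finset.Icc 1 m, (Odd x → χ x = χ 1) ∧ (Even x → χ x ≠ χ 1) := by
  obtain ⟨-, -, hmono, hrain⟩ := h
  have mono : ∀ a b, 1 ≤ a → 1 ≤ b → a + b ≤ m → χ a = χ b → χ (a + b) ≠ χ a := by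
    intro a b ha hb hab e e'
    exact hmono a (Finset.mem_Icc.2 ⟨ha, by omega⟩) b (Finset.mem_Icc.2 ⟨hb, by omega⟩) (a + b)
      (Finset.mem_Icc.2 ⟨by omega, hab⟩) rfl ⟨e, by rw [e', e]⟩
  have rain : ∀ a b, 1 ≤ a → 1 ≤ b → a + b ≤ m → χ a ≠ χ b →
      χ (a + b) = χ a ∨ χ (a + b) = χ b := by
    intro a b ha hb hab e
    by_contra hc
    push Not at hc
    exact hrain a (Finset.mem_Icc.2 ⟨ha, by omega⟩) b (Finset.mem_Icc.2 ⟨hb, by omega⟩) (a + b)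
      (Finset.mem_Icc.2 ⟨by omega, hab⟩) rfl ⟨e, hc.1.symm, hc.2.symm⟩
  have h2 : χ 2 ≠ χ 1 := mono 1 1 le_rfl le_rfl (by omega) rfl
  have hodd : ∀ k, 2 * k + 1 ≤ m → χ (2 * k + 1) = χ 1 := by
    intro k
    induction k using Nat.strong_induction_on with
    | _ k ih =>
      intro hk
      match k, ih, hk with
      | 0, _, _ => rfl
      | 1, _, _ => exact h31
      | j + 2, ih, hk =>
        have h4 : χ 4 ≠ χ 1 := mono 1 3 (by omega) (by omega) (by omega) h31.symm
        have h42 : χ 4 ≠ χ 2 := mono 2 2 (by omega) (by omega) (by omega) rfl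
        have i1 := ih (j + 1) (by omega) (by omega)
        have i2 := ih j (by omega) (by omega)
        have r1 := rain 2 (2 * (j + 1) + 1) (by omega) (by omega) (by omega) (by rwa [i1])
        have r2 := rain 4 (2 * j + 1) (by omega) (by omega) (by omega) (by rwa [i2])
        rw [i1, show 2 + (2 * (j + 1) + 1) = 2 * (j + 2) + 1 by ring] at r1
        rw [i2, show 4 + (2 * j + 1) = 2 * (j + 2) + 1 by ring] at r2
        rcases r1 with r1 | r1
        · rcases r2 with r2 | r2
          · exact absurd (r2.symm.trans r1) h42
          · exact r2
        · exact r1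
  intro x hx
  rw [Finset.mem_Icc] at hx
  refine ⟨?_, ?_⟩
  · rintro ⟨k, rfl⟩
    exact hodd k hx.2
  · rintro ⟨k, rfl⟩
    obtain ⟨j, rfl⟩ : ∃ j, k = j + 1 := ⟨k - 1, by omega⟩
    have := mono 1 (2 * j + 1) (by omega) (by omega) (by omega) (hodd j (by omega)).symm
    rwa [show 1 + (2 * j + 1) = j + 1 + (j + 1) by ring] at this
end

section
/- For every odd positive integer r, there exists a strong Gallai-Schur r-coloring of [1, 2·5^((r−1)/2) − 1], and for every m ≥ 2·5^((r−1)/2) there is no strong Gallai-Schur r-coloring of [1, m]. Equivalently, the strong Gallai-Schur number GS(r) equals 2·5^((r−1)/2) for odd r. -/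
/-- The strong Gallai–Schur number `GS r`: the least `n` such that no strong
Gallai–Schur `r`-coloring of `[1, m]` exists for any `m ≥ n`. -/
noncomputable def GS (r : ℕ) : ℕ :=
  sInf {n : ℕ | ∀ m, n ≤ m → ∀ χ : ℕ → ℕ, ¬ StrongGS m (Finset.Icc 1 r) χ}

/-- No rainbow triangles. -/
def NoRb (S : Finset ℕ) (c : ℕ → ℕ → ℕ) : Prop :=
  ∀ x ∈ S, ∀ y ∈ S, ∀ z ∈ S, x ≠ y → y ≠ z → x ≠ z →
    c x y = c y z ∨ c x y = c x z ∨ c y z = c x z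

/-- No monochromatic triangles. -/
def NoMono (S : Finset ℕ) (c : ℕ → ℕ → ℕ) : Prop :=
  ∀ x ∈ S, ∀ y ∈ S, ∀ z ∈ S, x ≠ y → y ≠ z → x ≠ z →
    ¬ (c x y = c y z ∧ c y z = c x z)

/-- Two sides with at most two colors across. -/
def Weak (S : Finset ℕ) (c : ℕ → ℕ → ℕ) : Prop :=
  ∃ i j, ∃ P : ℕ → Prop, (∃ a ∈ S, P a) ∧ (∃ b ∈ S, ¬ P b) ∧
    ∀ x ∈ S, ∀ y ∈ S, P x → ¬ P y → c x y = i ∨ c x y = j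

/-- A Gallai partition. -/
def Strong (S : Finset ℕ) (c : ℕ → ℕ → ℕ) : Prop :=
  ∃ i j, ∃ R : ℕ → ℕ → Prop, (∀ x, R x x) ∧ (∀ x y, R x y → R y x) ∧
    (∀ x y z, R x y → R y z → R x z) ∧
    (∃ a ∈ S, ∃ b ∈ S, ¬ R a b) ∧
    (∀ x ∈ S, ∀ y ∈ S, ¬ R x y → c x y = i ∨ c x y = j) ∧
    (∀ x ∈ S, ∀ x' ∈ S, ∀ y ∈ S, R x x' → ¬ R x y → c x y = c x' y)

lemma strong_of_weak (S : Finset ℕ) (c : ℕ → ℕ → ℕ) (hs : ∀ x y, c x y = c y x)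
    (hr : NoRb S c) (h : Weak S c) : Strong S c := by
  obtain ⟨i, j, P, ⟨a, ha, hPa⟩, ⟨b, hb, hPb⟩, hP⟩ := h
  let E : ℕ → ℕ → Prop := fun x y => x ∈ S ∧ y ∈ S ∧ x ≠ y ∧ c x y ≠ i ∧ c x y ≠ j
  have hE : ∀ x y, E x y → E y x := by
    rintro x y ⟨h1, h2, h3, h4, h5⟩
    exact ⟨h2, h1, h3.symm, by rwa [hs], by rwa [hs]⟩
  have hsymm : ∀ x y, Relation.ReflTransGen E x y → Relation.ReflTransGen E y x := by
    intro x y h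
    induction h with
    | refl => exact .refl
    | tail h1 h2 ih => exact .head (hE _ _ h2) ih
  have h2c : ∀ x ∈ S, ∀ y ∈ S, ¬ Relation.ReflTransGen E x y → c x y = i ∨ c x y = j := by
    intro x hx y hy h
    by_contra hc
    push Not at hc
    apply h
    by_cases hxy : x = y
    · rw [hxy]
    · exact .single ⟨hx, hy, hxy, hc.1, hc.2⟩
  refine ⟨i, j, Relation.ReflTransGen E, fun x => .refl, hsymm, fun x y z => .trans,
    ⟨a, ha, b, hb, ?_⟩, h2c, ?_⟩
  · intro h
    apply hPb
    clear hPb hb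
    induction h with
    | refl => exact hPa
    | tail h1 h2 ih =>
      by_contra hn
      obtain ⟨h3, h4, h5, h6, h7⟩ := h2
      rcases hP _ h3 _ h4 ih hn with h | h <;> contradiction
  · intro x hx x' _ y hy hxx hxy
    induction hxx with
    | refl => rfl
    | @tail u w h1 h2 ih =>
      rw [ih h2.1]
      obtain ⟨h3, h4, h5, h6, h7⟩ := h2
      have nu : ¬ Relation.ReflTransGen E u y := fun h => hxy (h1.trans h)
      have nw : ¬ Relation.ReflTransGen E w y :=
        fun h => hxy ((h1.tail ⟨h3, h4, h5, h6, h7⟩).trans h)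
      have e1 := h2c _ h3 _ hy nu
      have e2 := h2c _ h4 _ hy nw
      have d1 : u ≠ y := fun h => nu (h ▸ .refl)
      have d2 : w ≠ y := fun h => nw (h ▸ .refl)
      have := hr u h3 w h4 y hy h5 d2 d1
      grind

lemma weak_all (c : ℕ → ℕ → ℕ) (hs : ∀ x y, c x y = c y x) (S : Finset ℕ) :
    NoRb S c → 2 ≤ S.card → Weak S c := by
  induction S using Finset.induction_on with
  | empty => intro _ h; simp at h
  | @insert v S hv ih =>
    intro hr hcard
    rw [Finset.card_insert_of_notMem hv] at hcard
    have hr' : NoRb S c := by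
      intro x hx y hy z hz
      exact hr x (Finset.mem_insert_of_mem hx) y (Finset.mem_insert_of_mem hy) z
        (Finset.mem_insert_of_mem hz)
    have hrv : ∀ x ∈ S, ∀ y ∈ S, x ≠ y → c v x = c x y ∨ c v x = c v y ∨ c x y = c v y := by
      intro x hx y hy hxy
      exact hr v (Finset.mem_insert_self _ _) x (Finset.mem_insert_of_mem hx) y
        (Finset.mem_insert_of_mem hy) (fun h => hv (h ▸ hx)) hxy (fun h => hv (h ▸ hy))
    by_cases h1 : S.card = 1
    · obtain ⟨u, rfl⟩ := Finset.card_eq_one.mp h1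
      refine ⟨c v u, c v u, fun x => x = v, ⟨v, by simp, rfl⟩, ⟨u, by simp, ?_⟩, ?_⟩
      · intro h; apply hv; simp [h]
      · intro x hx y hy h1 h2
        simp at hy
        grind
    obtain ⟨i, j, R, hR1, hR2, hR3, ⟨a, ha, b, hb, hab⟩, hR5, hR6⟩ :=
      strong_of_weak S c hs hr' (ih hr' (by omega))
    by_cases hA : ∃ a ∈ S, ∀ u ∈ S, R a u → c v u = i ∨ c v u = j
    · obtain ⟨a, ha, hA⟩ := hA
      refine ⟨i, j, fun x => x ∈ S ∧ R a x, ⟨a, by simp [ha], ha, hR1 a⟩,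
        ⟨v, by simp, fun h => hv h.1⟩, ?_⟩
      rintro x - y hy ⟨hx, hax⟩ hny
      rcases Finset.mem_insert.mp hy with rfl | hy
      · rw [hs]; exact hA x hx hax
      · exact hR5 x hx y hy (fun h => hny ⟨hy, hR3 _ _ _ hax h⟩)
    · push Not at hA
      choose! u huS huR hui huj using hA
      -- cross non-{i,j} edges agree
      have key : ∀ x ∈ S, ∀ y ∈ S, ¬ R x y → c v x ≠ i → c v x ≠ j → c v y ≠ i → c v y ≠ j →
          c v x = c v y := by
        intro x hx y hy hxy h1 h2 h3 h4
        have := hrv x hx y hy (fun h => hxy (h ▸ hR1 _))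
        have := hR5 x hx y hy hxy
        grind
      have hl : ∀ x ∈ S, c v x ≠ i → c v x ≠ j → c v x = c v (u a) := by
        intro x hx h1 h2
        by_cases hxa : R x a
        · have n1 : ¬ R x (u b) := fun h =>
            hab (hR3 _ _ _ (hR2 _ _ hxa) (hR3 _ _ _ h (hR2 _ _ (huR b hb))))
          have n2 : ¬ R (u b) (u a) := fun h =>
            hab (hR3 _ _ _ (huR a ha) (hR3 _ _ _ (hR2 _ _ h) (hR2 _ _ (huR b hb))))
          rw [key x hx (u b) (huS b hb) n1 h1 h2 (hui b hb) (huj b hb)]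
          exact key _ (huS b hb) _ (huS a ha) n2 (hui b hb) (huj b hb) (hui a ha) (huj a ha)
        · exact key x hx _ (huS a ha) (fun h => hxa (hR3 _ _ _ h (hR2 _ _ (huR a ha)))) h1 h2
            (hui a ha) (huj a ha)
      -- a special color at w is the color of all cross edges at w
      have hcol : ∀ w ∈ S, (c v w = i ∨ c v w = j) → ∀ y ∈ S, ¬ R w y → c w y = c v w := by
        intro w hw hi y hy hwy
        have n : ¬ R w (u y) := fun h => hwy (hR3 _ _ _ h (hR2 _ _ (huR y hy)))
        have e0 : c (u y) w = c y w := (hR6 y hy (u y) (huS y hy) w hw (huR y hy)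
          (fun h => hwy (hR2 _ _ h))).symm
        have e1 := hrv w hw (u y) (huS y hy) (fun h => n (h ▸ hR1 _))
        have e2 := hR5 w hw (u y) (huS y hy) n
        have := hui y hy
        have := huj y hy
        rw [hs w y, ← e0, hs (u y) w]
        grind
      have hsame : ∀ w ∈ S, ∀ w' ∈ S, (c v w = i ∨ c v w = j) → (c v w' = i ∨ c v w' = j) →
          c v w = c v w' := by
        intro w hw w' hw' h1 h2
        by_cases hww : R w w'
        · have : ∃ y ∈ S, ¬ R w y := by
            by_contra hcon
            push Not at hcon
            exact hab (hR3 _ _ _ (hR2 _ _ (hcon a ha)) (hcon b hb))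
          obtain ⟨y, hy, hwy⟩ := this
          rw [← hcol w hw h1 y hy hwy, hR6 w hw w' hw' y hy hww hwy]
          exact hcol w' hw' h2 y hy (fun h => hwy (hR3 _ _ _ hww h))
        · rw [← hcol w hw h1 w' hw' hww, hs]
          exact hcol w' hw' h2 w hw (fun h => hww (hR2 _ _ h))
      have hfin : ∃ k, ∀ w ∈ S, c v w = k ∨ c v w = c v (u a) := by
        by_cases hex : ∃ w ∈ S, c v w = i ∨ c v w = j
        · obtain ⟨w, hw, hwi⟩ := hex
          refine ⟨c v w, fun x hx => ?_⟩
          by_cases hxi : c v x = i ∨ c v x = j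
          · exact Or.inl (hsame x hx w hw hxi hwi)
          · push Not at hxi
            exact Or.inr (hl x hx hxi.1 hxi.2)
        · push Not at hex
          exact ⟨0, fun x hx => Or.inr (hl x hx (hex x hx).1 (hex x hx).2)⟩
      obtain ⟨k, hk⟩ := hfin
      refine ⟨k, c v (u a), fun x => x = v, ⟨v, by simp, rfl⟩,
        ⟨a, by simp [ha], fun h => hv (h ▸ ha)⟩, ?_⟩
      rintro x - y hy rfl hyv
      exact hk y (Finset.mem_of_mem_insert_of_ne hy hyv)

/-- The extremal function. -/
def gf : ℕ → ℕ
  | 0 => 1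
  | 1 => 2
  | (k+2) => 5 * gf k

lemma gf_two : ∀ k, 2 * gf k ≤ gf (k+1)
  | 0 => by simp [gf]
  | 1 => by simp [gf]
  | (k+2) => by
    have := gf_two k
    simp only [gf] at *
    omega

lemma two_classes (R : ℕ → ℕ → Prop) (T : Finset ℕ) (M : ℕ)
    (hR1 : ∀ x, R x x)
    (hM : ∀ x ∈ T, ∀ U ⊆ T, (∀ y ∈ U, R x y) → U.card ≤ M)
    (h3 : ∀ x ∈ T, ∀ y ∈ T, ∀ z ∈ T, R x y ∨ R x z ∨ R y z) : T.card ≤ 2 * M := by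
  classical
  rcases T.eq_empty_or_nonempty with rfl | ⟨x, hx⟩
  · simp
  have e := Finset.card_filter_add_card_filter_not (s := T) (fun y => R x y)
  have h1 := hM x hx (T.filter (fun y => R x y)) (Finset.filter_subset _ _) (by simp)
  have h2 : (T.filter (fun y => ¬ R x y)).card ≤ M := by
    rcases (T.filter (fun y => ¬ R x y)).eq_empty_or_nonempty with h | ⟨y, hy⟩
    · rw [h]; simp
    · have hy' := Finset.mem_filter.mp hy
      refine hM y hy'.1 _ (Finset.filter_subset _ _) ?_
      intro z hz
      have hz' := Finset.mem_filter.mp hz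
      have := h3 x hx y hy'.1 z hz'.1
      tauto
  omega

lemma mainBound (c : ℕ → ℕ → ℕ) (hs : ∀ x y, c x y = c y x) (k : ℕ) :
    ∀ (C S : Finset ℕ), C.card = k → NoRb S c → NoMono S c →
      (∀ x ∈ S, ∀ y ∈ S, x ≠ y → c x y ∈ C) → S.card ≤ gf k := by
  classical
  induction k using Nat.strong_induction_on with
  | _ k ih =>
  intro C S hC hr hm hc
  have gpos : 1 ≤ gf k := by
    clear * -
    induction k with
    | zero => simp [gf]
    | succ n ih => have := gf_two n; omega
  by_cases hcard : S.card ≤ 1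
  · omega
  obtain ⟨i, j, R, hR1, hR2, hR3, ⟨a, ha, b, hb, hab⟩, hR5, hR6⟩ :=
    strong_of_weak S c hs hr (weak_all c hs S hr (by omega))
  have subr : ∀ U ⊆ S, NoRb U c := fun U hU x hx y hy z hz =>
    hr x (hU hx) y (hU hy) z (hU hz)
  have subm : ∀ U ⊆ S, NoMono U c := fun U hU x hx y hy z hz =>
    hm x (hU hx) y (hU hy) z (hU hz)
  have hne : ∀ x y, ¬ R x y → x ≠ y := fun x y h e => h (e ▸ hR1 _)
  by_cases hone : ∃ x ∈ S, ∃ l, ∀ y ∈ S, ¬ R x y → c x y = l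
  · obtain ⟨x, hx, l, hl⟩ := hone
    have hex : ∃ y ∈ S, ¬ R x y := by
      by_contra hcon
      push Not at hcon
      exact hab (hR3 _ _ _ (hR2 _ _ (hcon a ha)) (hcon b hb))
    obtain ⟨y, hy, hxy⟩ := hex
    have hlC : l ∈ C := hl y hy hxy ▸ hc x hx y hy (hne _ _ hxy)
    have hkpos : 0 < k := hC ▸ Finset.card_pos.mpr ⟨l, hlC⟩
    have hCe : (C.erase l).card = k - 1 := by rw [Finset.card_erase_of_mem hlC, hC]
    have b1 : (S.filter (fun y => R x y)).card ≤ gf (k-1) := by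
      refine ih (k-1) (by omega) (C.erase l) _ hCe (subr _ (Finset.filter_subset _ _))
        (subm _ (Finset.filter_subset _ _)) ?_
      intro p hp q hq hpq
      obtain ⟨hp, hp'⟩ := Finset.mem_filter.mp hp
      obtain ⟨hq, hq'⟩ := Finset.mem_filter.mp hq
      refine Finset.mem_erase.mpr ⟨?_, hc p hp q hq hpq⟩
      intro e
      have n1 : ¬ R p y := fun h => hxy (hR3 _ _ _ hp' h)
      have n2 : ¬ R q y := fun h => hxy (hR3 _ _ _ hq' h)
      have e1 := hR6 x hx p hp y hy hp' hxy
      have e2 := hR6 x hx q hq y hy hq' hxy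
      have e3 := hl y hy hxy
      exact hm p hp q hq y hy hpq (hne _ _ n2) (hne _ _ n1) ⟨by omega, by omega⟩
    have b2 : (S.filter (fun y => ¬ R x y)).card ≤ gf (k-1) := by
      refine ih (k-1) (by omega) (C.erase l) _ hCe (subr _ (Finset.filter_subset _ _))
        (subm _ (Finset.filter_subset _ _)) ?_
      intro p hp q hq hpq
      obtain ⟨hp, hp'⟩ := Finset.mem_filter.mp hp
      obtain ⟨hq, hq'⟩ := Finset.mem_filter.mp hq
      refine Finset.mem_erase.mpr ⟨?_, hc p hp q hq hpq⟩
      intro e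
      have e1 := hl p hp hp'
      have e2 := hl q hq hq'
      exact hm x hx p hp q hq (hne _ _ hp') hpq (hne _ _ hq') ⟨by omega, by omega⟩
    have e := Finset.card_filter_add_card_filter_not (s := S) (fun y => R x y)
    have := gf_two (k-1)
    rw [Nat.sub_add_cancel hkpos] at this
    omega
  · push Not at hone
    have both : ∀ x ∈ S, (∃ y ∈ S, ¬ R x y ∧ c x y = i) ∧ (∃ y ∈ S, ¬ R x y ∧ c x y = j) := by
      intro x hx
      obtain ⟨y, hy, hxy, h1⟩ := hone x hx j
      obtain ⟨z, hz, hxz, h2⟩ := hone x hx i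
      have := hR5 x hx y hy hxy
      have := hR5 x hx z hz hxz
      exact ⟨⟨y, hy, hxy, by tauto⟩, ⟨z, hz, hxz, by tauto⟩⟩
    have hij : i ≠ j := by
      rintro rfl
      obtain ⟨y, hy, hxy, h1⟩ := hone a ha i
      have := hR5 a ha y hy hxy
      tauto
    have hiC : i ∈ C := by
      obtain ⟨y, hy, hxy, h1⟩ := (both a ha).1
      exact h1 ▸ hc a ha y hy (hne _ _ hxy)
    have hjC : j ∈ C := by
      obtain ⟨y, hy, hxy, h1⟩ := (both a ha).2
      exact h1 ▸ hc a ha y hy (hne _ _ hxy)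
    have hCe : ((C.erase i).erase j).card = k - 2 := by
      rw [Finset.card_erase_of_mem (Finset.mem_erase.mpr ⟨hij.symm, hjC⟩),
        Finset.card_erase_of_mem hiC, hC]
      omega
    have hk2 : 2 ≤ k := by
      have : ({i, j} : Finset ℕ).card ≤ C.card := Finset.card_le_card (by
        intro t ht; simp at ht; rcases ht with rfl | rfl <;> assumption)
      rw [Finset.card_pair hij] at this
      omega
    have hcls : ∀ x ∈ S, ∀ U ⊆ S, (∀ y ∈ U, R x y) → U.card ≤ gf (k-2) := by
      intro x hx U hU hxU
      refine ih (k-2) (by omega) _ _ hCe (subr _ hU) (subm _ hU) ?_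
      intro p hp q hq hpq
      have aux : ∀ l, (∃ y ∈ S, ¬ R x y ∧ c x y = l) → c p q ≠ l := by
        rintro l ⟨y, hy, hxy, hl⟩ e
        have n1 : ¬ R p y := fun h => hxy (hR3 _ _ _ (hxU p hp) h)
        have n2 : ¬ R q y := fun h => hxy (hR3 _ _ _ (hxU q hq) h)
        have e1 := hR6 x hx p (hU hp) y hy (hxU p hp) hxy
        have e2 := hR6 x hx q (hU hq) y hy (hxU q hq) hxy
        exact hm p (hU hp) q (hU hq) y hy hpq (hne _ _ n2) (hne _ _ n1) ⟨by omega, by omega⟩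
      exact Finset.mem_erase.mpr ⟨aux j (both x hx).2, Finset.mem_erase.mpr
        ⟨aux i (both x hx).1, hc p (hU hp) q (hU hq) hpq⟩⟩
    have hnb : ∀ l, (S.filter (fun y => ¬ R a y ∧ c a y = l)).card ≤ 2 * gf (k-2) := by
      intro l
      refine two_classes R _ _ hR1 ?_ ?_
      · intro x hx U hU hxU
        exact hcls x (Finset.mem_filter.mp hx).1 U (hU.trans (Finset.filter_subset _ _)) hxU
      · intro x hx y hy z hz
        obtain ⟨hx, hx1, hx2⟩ := Finset.mem_filter.mp hx
        obtain ⟨hy, hy1, hy2⟩ := Finset.mem_filter.mp hy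
        obtain ⟨hz, hz1, hz2⟩ := Finset.mem_filter.mp hz
        by_contra hcon
        push Not at hcon
        obtain ⟨n1, n2, n3⟩ := hcon
        have f1 := hm a ha x hx y hy (hne _ _ hx1) (hne _ _ n1) (hne _ _ hy1)
        have f2 := hm a ha x hx z hz (hne _ _ hx1) (hne _ _ n2) (hne _ _ hz1)
        have f3 := hm a ha y hy z hz (hne _ _ hy1) (hne _ _ n3) (hne _ _ hz1)
        have f4 := hm x hx y hy z hz (hne _ _ n1) (hne _ _ n3) (hne _ _ n2)
        have g1 := hR5 x hx y hy n1
        have g2 := hR5 x hx z hz n2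
        have g3 := hR5 y hy z hz n3
        have g4 := hR5 a ha x hx hx1
        omega
    have hsub : S ⊆ S.filter (fun y => R a y) ∪ (S.filter (fun y => ¬ R a y ∧ c a y = i) ∪
        S.filter (fun y => ¬ R a y ∧ c a y = j)) := by
      intro x hx
      have := hR5 a ha x hx
      simp only [Finset.mem_union, Finset.mem_filter]
      tauto
    have t1 := Finset.card_le_card hsub
    have t2 := Finset.card_union_le (S.filter (fun y => R a y))
      (S.filter (fun y => ¬ R a y ∧ c a y = i) ∪ S.filter (fun y => ¬ R a y ∧ c a y = j))
    have t3 := Finset.card_union_le (S.filter (fun y => ¬ R a y ∧ c a y = i))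
      (S.filter (fun y => ¬ R a y ∧ c a y = j))
    have t4 := hcls a ha (S.filter (fun y => R a y)) (Finset.filter_subset _ _) (by simp)
    have t5 := hnb i
    have t6 := hnb j
    obtain ⟨n, rfl⟩ : ∃ n, k = n + 2 := ⟨k - 2, by omega⟩
    simp only [gf, Nat.add_sub_cancel] at *
    omega

lemma gf_odd (n : ℕ) : gf (2 * n + 1) = 2 * 5 ^ n := by
  induction n with
  | zero => simp [gf]
  | succ n ih =>
    rw [show 2 * (n+1) + 1 = (2 * n + 1) + 2 by ring, gf, ih, pow_succ]; ring

lemma upper (m r : ℕ) (χ : ℕ → ℕ) (h : StrongGS m (Finset.Icc 1 r) χ) : m + 1 ≤ gf r := by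
  obtain ⟨h1, -, h3, h4⟩ := h
  simp only [Finset.mem_Icc] at h3 h4
  have := mainBound (fun x y => χ ((x - y) + (y - x))) (by intro x y; simp only [add_comm]) r
    (Finset.Icc 1 r) (Finset.range (m+1)) (by simp) ?_ ?_ ?_
  · simpa using this
  · have key : ∀ x y z : ℕ, x < y → y < z → z < m + 1 →
      ¬ (χ (y - x) ≠ χ (z - y) ∧ χ (y - x) ≠ χ (z - x) ∧ χ (z - y) ≠ χ (z - x)) := by
      intro x y z hxy hyz hz
      exact h4 (y - x) (by omega) (z - y) (by omega) (z - x) (by omega) (by omega)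
    intro x hx y hy z hz hxy hyz hxz
    simp only [Finset.mem_range] at hx hy hz
    have d : ∀ p q : ℕ, p < q → (p - q) + (q - p) = q - p ∧ (q - p) + (p - q) = q - p := by omega
    rcases lt_or_gt_of_ne hxy with a1 | a1 <;> rcases lt_or_gt_of_ne hyz with a2 | a2 <;>
      rcases lt_or_gt_of_ne hxz with a3 | a3 <;>
      simp only [(d _ _ a1).1, (d _ _ a1).2, (d _ _ a2).1, (d _ _ a2).2, (d _ _ a3).1,
        (d _ _ a3).2] <;> grind
  · have key : ∀ x y z : ℕ, x < y → y < z → z < m + 1 →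
      ¬ (χ (y - x) = χ (z - y) ∧ χ (z - y) = χ (z - x)) := by
      intro x y z hxy hyz hz
      exact h3 (y - x) (by omega) (z - y) (by omega) (z - x) (by omega) (by omega)
    intro x hx y hy z hz hxy hyz hxz
    simp only [Finset.mem_range] at hx hy hz
    have d : ∀ p q : ℕ, p < q → (p - q) + (q - p) = q - p ∧ (q - p) + (p - q) = q - p := by omega
    rcases lt_or_gt_of_ne hxy with a1 | a1 <;> rcases lt_or_gt_of_ne hyz with a2 | a2 <;>
      rcases lt_or_gt_of_ne hxz with a3 | a3 <;>
      simp only [(d _ _ a1).1, (d _ _ a1).2, (d _ _ a2).1, (d _ _ a2).2, (d _ _ a3).1,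
        (d _ _ a3).2] <;> grind
  · intro x hx y hy hxy
    simp only [Finset.mem_range] at hx hy
    exact h1 _ (Finset.mem_Icc.mpr (by omega))

lemma lower (n : ℕ) : ∃ χ : ℕ → ℕ, StrongGS (2 * 5 ^ n - 1) (Finset.Icc 1 (2 * n + 1)) χ := by
  induction n with
  | zero =>
    refine ⟨fun _ => 1, ?_⟩
    refine ⟨by simp, by simp, ?_, ?_⟩
    · intro a ha b hb c hc; simp at ha hb hc; omega
    · simp
  | succ n ih =>
    obtain ⟨χ, h1, h2, h3, h4⟩ := ih
    have hp : 1 ≤ 5 ^ n := Nat.one_le_pow _ _ (by norm_num)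
    have hM : 2 * 5 ^ (n+1) - 1 = 5 * (2 * 5 ^ n - 1) + 4 := by rw [pow_succ]; omega
    rw [hM]
    generalize 2 * 5 ^ n - 1 = m at *
    simp only [Finset.mem_Icc] at h1 h2 h3 h4
    let ψ : ℕ → ℕ := fun x => if x % 5 = 0 then χ (x / 5) else
      if x % 5 = 1 ∨ x % 5 = 4 then 2 * n + 2 else 2 * n + 3
    have p0 : ∀ x, x % 5 = 0 → ψ x = χ (x / 5) := fun x h => by simp [ψ, h]
    have p1 : ∀ x, x % 5 = 1 ∨ x % 5 = 4 → ψ x = 2 * n + 2 := fun x h => by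
      have : x % 5 ≠ 0 := by omega
      simp [ψ, h, this]
    have p2 : ∀ x, x % 5 = 2 ∨ x % 5 = 3 → ψ x = 2 * n + 3 := fun x h => by
      have : x % 5 ≠ 0 := by omega
      have : ¬ (x % 5 = 1 ∨ x % 5 = 4) := by omega
      simp only [ψ]; rw [if_neg (by assumption), if_neg (by assumption)]
    have pc : ∀ x, 1 ≤ x → x ≤ 5 * m + 4 →
        (x % 5 = 0 ∧ ψ x = χ (x / 5) ∧ 1 ≤ x / 5 ∧ x / 5 ≤ m ∧ 1 ≤ ψ x ∧ ψ x ≤ 2 * n + 1) ∨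
        ((x % 5 = 1 ∨ x % 5 = 4) ∧ ψ x = 2 * n + 2) ∨
        ((x % 5 = 2 ∨ x % 5 = 3) ∧ ψ x = 2 * n + 3) := by
      intro x hx hx'
      by_cases e0 : x % 5 = 0
      · have := h1 (x / 5) (by omega)
        have := p0 x e0
        left; omega
      · by_cases e1 : x % 5 = 1 ∨ x % 5 = 4
        · exact Or.inr (Or.inl ⟨e1, p1 x e1⟩)
        · exact Or.inr (Or.inr ⟨by omega, p2 x (by omega)⟩)
    refine ⟨ψ, ?_, ?_, ?_, ?_⟩
    · intro x hx
      rw [Finset.mem_Icc] at hx ⊢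
      have := pc x hx.1 hx.2
      omega
    · intro i hi
      simp only [Finset.mem_Icc] at hi ⊢
      by_cases e : i ≤ 2 * n + 1
      · obtain ⟨x, hx, hxi⟩ := h2 i (by omega)
        refine ⟨5 * x, by omega, ?_⟩
        rw [p0 _ (by omega), ← hxi]; congr 1; omega
      · by_cases e : i = 2 * n + 2
        · exact ⟨1, by omega, by rw [p1 1 (by omega), e]⟩
        · exact ⟨2, by omega, by rw [p2 2 (by omega)]; omega⟩
    · intro a ha b hb c hc habc
      simp only [Finset.mem_Icc] at ha hb hc
      have qa := pc a ha.1 ha.2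
      have qb := pc b hb.1 hb.2
      have qc := pc c hc.1 hc.2
      have q := h3 (a / 5)
      by_cases e : a % 5 = 0 ∧ b % 5 = 0
      · have := h3 (a / 5) (by omega) (b / 5) (by omega) (c / 5) (by omega) (by omega)
        omega
      · omega
    · intro a ha b hb c hc habc
      simp only [Finset.mem_Icc] at ha hb hc
      have qa := pc a ha.1 ha.2
      have qb := pc b hb.1 hb.2
      have qc := pc c hc.1 hc.2
      by_cases e : a % 5 = 0 ∧ b % 5 = 0
      · have := h4 (a / 5) (by omega) (b / 5) (by omega) (c / 5) (by omega) (by omega)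
        omega
      · omega

/-- For every odd positive `r`, there is a strong Gallai–Schur `r`-coloring of
`[1, 2·5^((r-1)/2) - 1]`, no strong Gallai–Schur `r`-coloring of `[1, m]` exists
for any `m ≥ 2·5^((r-1)/2)`, and consequently `GS r = 2·5^((r-1)/2)`. -/
theorem strong_GS_odd (r : ℕ) (hr : 0 < r) (hro : Odd r) :
    (∃ χ : ℕ → ℕ, StrongGS (2 * 5 ^ ((r - 1) / 2) - 1) (Finset.Icc 1 r) χ) ∧
    (∀ m, 2 * 5 ^ ((r - 1) / 2) ≤ m → ∀ χ : ℕ → ℕ, ¬ StrongGS m (Finset.Icc 1 r) χ) ∧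
    GS r = 2 * 5 ^ ((r - 1) / 2) := by
  obtain ⟨n, rfl⟩ := hro
  have e : (2 * n + 1 - 1) / 2 = n := by omega
  rw [e]
  have hup : ∀ m, 2 * 5 ^ n ≤ m → ∀ χ : ℕ → ℕ, ¬ StrongGS m (Finset.Icc 1 (2 * n + 1)) χ := by
    intro m hm χ h
    have := upper m _ χ h
    rw [gf_odd] at this
    omega
  refine ⟨lower n, hup, ?_⟩
  apply le_antisymm
  · exact Nat.sInf_le hup
  · refine le_csInf (Set.nonempty_of_mem (x := 2 * 5 ^ n) hup) ?_
    intro k hk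
    by_contra hlt
    obtain ⟨χ, h⟩ := lower n
    exact hk _ (by omega) χ h
end

section
/- For every odd integer r ≥ 3, there exists a weak Gallai-Schur r-coloring of [1, 18·5^((r−3)/2) − 1], and for every m ≥ 18·5^((r−3)/2) there is no weak Gallai-Schur r-coloring of [1, m]. Equivalently, the weak Gallai-Schur number WGS(r) equals 18·5^((r−3)/2) for odd r ≥ 3. -/
/-- The weak Gallai–Schur number `WGS r`: the least `n` such that no weak
Gallai–Schur `r`-coloring of `[1, m]` exists for any `m ≥ n`. -/
noncomputable def WGS (r : ℕ) : ℕ :=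
  sInf {n : ℕ | ∀ m, n ≤ m → ∀ χ : ℕ → ℕ, ¬ WeakGS m (Finset.Icc 1 r) χ}

/-- No weak monochromatic and no rainbow solutions in `[1, m]`. -/
structure GoodCol (m : ℕ) (χ : ℕ → ℕ) : Prop where
  mono : ∀ {a b : ℕ}, 1 ≤ a → a < b → a + b ≤ m → ¬ (χ a = χ b ∧ χ b = χ (a + b))
  rain : ∀ {a b : ℕ}, 1 ≤ a → 1 ≤ b → a + b ≤ m →
    χ a = χ b ∨ χ a = χ (a + b) ∨ χ b = χ (a + b)

lemma weakGS_iff (m : ℕ) (C : Finset ℕ) (χ : ℕ → ℕ) :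
    WeakGS m C χ ↔ (∀ x, 1 ≤ x → x ≤ m → χ x ∈ C) ∧
      (∀ i ∈ C, ∃ x, 1 ≤ x ∧ x ≤ m ∧ χ x = i) ∧ GoodCol m χ := by
  unfold WeakGS
  simp only [Finset.mem_Icc]
  constructor
  · rintro ⟨h1, h2, h3, h4⟩
    refine ⟨fun x hx hm => h1 x ⟨hx, hm⟩, ?_, ?_, ?_⟩
    · intro i hi
      obtain ⟨x, hx, e⟩ := h2 i hi
      exact ⟨x, hx.1, hx.2, e⟩
    · intro a b ha hab hm
      exact h3 a ⟨ha, by lia⟩ b ⟨by lia, by lia⟩ (a + b) ⟨by lia, hm⟩ rfl (by lia) (by lia) (by lia)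
    · intro a b ha hb hm
      have := h4 a ⟨ha, by lia⟩ b ⟨by lia, by lia⟩ (a + b) ⟨by lia, hm⟩ rfl
      tauto
  · rintro ⟨h1, h2, h3⟩
    refine ⟨fun x hx => h1 x hx.1 hx.2, ?_, ?_, ?_⟩
    · intro i hi
      obtain ⟨x, hx, hm, e⟩ := h2 i hi
      exact ⟨x, ⟨hx, hm⟩, e⟩
    · rintro a ha b hb c hc rfl hab - - ⟨e1, e2⟩
      rcases lt_or_gt_of_ne hab with h | h
      · exact h3.mono ha.1 h hc.2 ⟨e1, e2⟩
      · exact h3.mono hb.1 h (by lia) ⟨e1.symm, by rw [Nat.add_comm b a, e1, e2]⟩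
    · rintro a ha b hb c hc rfl
      have := h3.rain ha.1 hb.1 hc.2
      tauto

lemma start_cases (c1 c2 c3 c4 c5 c6 c7 c8 c9 c10 : ℕ)
    (m1_2 : ¬ (c1 = c2 ∧ c2 = c3)) (r1_2 : c1 = c2 ∨ c1 = c3 ∨ c2 = c3)
    (m1_3 : ¬ (c1 = c3 ∧ c3 = c4)) (r1_3 : c1 = c3 ∨ c1 = c4 ∨ c3 = c4)
    (m1_4 : ¬ (c1 = c4 ∧ c4 = c5)) (r1_4 : c1 = c4 ∨ c1 = c5 ∨ c4 = c5)
    (m2_3 : ¬ (c2 = c3 ∧ c3 = c5)) (r2_3 : c2 = c3 ∨ c2 = c5 ∨ c3 = c5)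
    (m1_5 : ¬ (c1 = c5 ∧ c5 = c6)) (r1_5 : c1 = c5 ∨ c1 = c6 ∨ c5 = c6)
    (m2_4 : ¬ (c2 = c4 ∧ c4 = c6)) (r2_4 : c2 = c4 ∨ c2 = c6 ∨ c4 = c6)
    (m1_6 : ¬ (c1 = c6 ∧ c6 = c7)) (r1_6 : c1 = c6 ∨ c1 = c7 ∨ c6 = c7)
    (m2_5 : ¬ (c2 = c5 ∧ c5 = c7)) (r2_5 : c2 = c5 ∨ c2 = c7 ∨ c5 = c7)
    (m3_4 : ¬ (c3 = c4 ∧ c4 = c7)) (r3_4 : c3 = c4 ∨ c3 = c7 ∨ c4 = c7)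
    (m1_7 : ¬ (c1 = c7 ∧ c7 = c8)) (r1_7 : c1 = c7 ∨ c1 = c8 ∨ c7 = c8)
    (m2_6 : ¬ (c2 = c6 ∧ c6 = c8)) (r2_6 : c2 = c6 ∨ c2 = c8 ∨ c6 = c8)
    (m3_5 : ¬ (c3 = c5 ∧ c5 = c8)) (r3_5 : c3 = c5 ∨ c3 = c8 ∨ c5 = c8)
    (m1_8 : ¬ (c1 = c8 ∧ c8 = c9)) (r1_8 : c1 = c8 ∨ c1 = c9 ∨ c8 = c9)
    (m2_7 : ¬ (c2 = c7 ∧ c7 = c9)) (r2_7 : c2 = c7 ∨ c2 = c9 ∨ c7 = c9)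
    (m3_6 : ¬ (c3 = c6 ∧ c6 = c9)) (r3_6 : c3 = c6 ∨ c3 = c9 ∨ c6 = c9)
    (m4_5 : ¬ (c4 = c5 ∧ c5 = c9)) (r4_5 : c4 = c5 ∨ c4 = c9 ∨ c5 = c9)
    (m1_9 : ¬ (c1 = c9 ∧ c9 = c10)) (r1_9 : c1 = c9 ∨ c1 = c10 ∨ c9 = c10)
    (m2_8 : ¬ (c2 = c8 ∧ c8 = c10)) (r2_8 : c2 = c8 ∨ c2 = c10 ∨ c8 = c10)
    (m3_7 : ¬ (c3 = c7 ∧ c7 = c10)) (r3_7 : c3 = c7 ∨ c3 = c10 ∨ c7 = c10)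
    (m4_6 : ¬ (c4 = c6 ∧ c6 = c10)) (r4_6 : c4 = c6 ∨ c4 = c10 ∨ c6 = c10) :
    (c2 ≠ c1 ∧ c3 = c1 ∧ ((c4 ≠ c1 ∧ c4 ≠ c2) ∨ (c5 = c1 ∧ c6 ≠ c1 ∧ c6 ≠ c2))) ∨
    (c2 ≠ c1 ∧ c3 = c2 ∧ c4 = c1 ∧ c5 ≠ c1 ∧ c5 ≠ c2) := by
  by_cases h2 : c2 = c1 <;> by_cases h3 : c3 = c1 <;> by_cases h4 : c4 = c1 <;>
    grind (splits := 40)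

lemma GoodCol.start {m : ℕ} {χ : ℕ → ℕ} (h : GoodCol m χ) (hm : 10 ≤ m) :
    (χ 2 ≠ χ 1 ∧ χ 3 = χ 1 ∧ ((χ 4 ≠ χ 1 ∧ χ 4 ≠ χ 2) ∨ (χ 5 = χ 1 ∧ χ 6 ≠ χ 1 ∧ χ 6 ≠ χ 2))) ∨
    (χ 2 ≠ χ 1 ∧ χ 3 = χ 2 ∧ χ 4 = χ 1 ∧ χ 5 ≠ χ 1 ∧ χ 5 ≠ χ 2) := by
  exact start_cases (χ 1) (χ 2) (χ 3) (χ 4) (χ 5) (χ 6) (χ 7) (χ 8) (χ 9) (χ 10)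
    (h.mono (a := 1) (b := 2) (by lia) (by lia) (by lia)) (h.rain (a := 1) (b := 2) (by lia) (by lia) (by lia))
    (h.mono (a := 1) (b := 3) (by lia) (by lia) (by lia)) (h.rain (a := 1) (b := 3) (by lia) (by lia) (by lia))
    (h.mono (a := 1) (b := 4) (by lia) (by lia) (by lia)) (h.rain (a := 1) (b := 4) (by lia) (by lia) (by lia))
    (h.mono (a := 2) (b := 3) (by lia) (by lia) (by lia)) (h.rain (a := 2) (b := 3) (by lia) (by lia) (by lia))
    (h.mono (a := 1) (b := 5) (by lia) (by lia) (by lia)) (h.rain (a := 1) (b := 5) (by lia) (by lia) (by lia))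
    (h.mono (a := 2) (b := 4) (by lia) (by lia) (by lia)) (h.rain (a := 2) (b := 4) (by lia) (by lia) (by lia))
    (h.mono (a := 1) (b := 6) (by lia) (by lia) (by lia)) (h.rain (a := 1) (b := 6) (by lia) (by lia) (by lia))
    (h.mono (a := 2) (b := 5) (by lia) (by lia) (by lia)) (h.rain (a := 2) (b := 5) (by lia) (by lia) (by lia))
    (h.mono (a := 3) (b := 4) (by lia) (by lia) (by lia)) (h.rain (a := 3) (b := 4) (by lia) (by lia) (by lia))
    (h.mono (a := 1) (b := 7) (by lia) (by lia) (by lia)) (h.rain (a := 1) (b := 7) (by lia) (by lia) (by lia))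
    (h.mono (a := 2) (b := 6) (by lia) (by lia) (by lia)) (h.rain (a := 2) (b := 6) (by lia) (by lia) (by lia))
    (h.mono (a := 3) (b := 5) (by lia) (by lia) (by lia)) (h.rain (a := 3) (b := 5) (by lia) (by lia) (by lia))
    (h.mono (a := 1) (b := 8) (by lia) (by lia) (by lia)) (h.rain (a := 1) (b := 8) (by lia) (by lia) (by lia))
    (h.mono (a := 2) (b := 7) (by lia) (by lia) (by lia)) (h.rain (a := 2) (b := 7) (by lia) (by lia) (by lia))
    (h.mono (a := 3) (b := 6) (by lia) (by lia) (by lia)) (h.rain (a := 3) (b := 6) (by lia) (by lia) (by lia))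
    (h.mono (a := 4) (b := 5) (by lia) (by lia) (by lia)) (h.rain (a := 4) (b := 5) (by lia) (by lia) (by lia))
    (h.mono (a := 1) (b := 9) (by lia) (by lia) (by lia)) (h.rain (a := 1) (b := 9) (by lia) (by lia) (by lia))
    (h.mono (a := 2) (b := 8) (by lia) (by lia) (by lia)) (h.rain (a := 2) (b := 8) (by lia) (by lia) (by lia))
    (h.mono (a := 3) (b := 7) (by lia) (by lia) (by lia)) (h.rain (a := 3) (b := 7) (by lia) (by lia) (by lia))
    (h.mono (a := 4) (b := 6) (by lia) (by lia) (by lia)) (h.rain (a := 4) (b := 6) (by lia) (by lia) (by lia))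

/-- First structural case: all odd numbers have the color of `1`. -/
lemma GoodCol.odd_case {m : ℕ} {χ : ℕ → ℕ} (h : GoodCol m χ) (h2 : χ 2 ≠ χ 1) (h3 : χ 3 = χ 1)
    (h4 : (χ 4 ≠ χ 1 ∧ χ 4 ≠ χ 2) ∨ (χ 5 = χ 1 ∧ χ 6 ≠ χ 1 ∧ χ 6 ≠ χ 2)) :
    ∀ q, 2 * q + 1 ≤ m → χ (2 * q + 1) = χ 1 := by
  intro q
  induction q using Nat.strong_induction_on with
  | _ q ih =>
  intro hq
  by_cases q0 : q = 0
  · subst q0; rfl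
  by_cases q1 : q = 1
  · subst q1; exact h3
  have e1 := ih (q - 1) (by lia) (by lia)
  have r1 := h.rain (a := 2) (b := 2 * (q - 1) + 1) (by lia) (by lia) (by lia)
  have e2 := ih (q - 2) (by lia) (by lia)
  have r2 := h.rain (a := 4) (b := 2 * (q - 2) + 1) (by lia) (by lia) (by lia)
  rw [show 2 + (2 * (q - 1) + 1) = 2 * q + 1 by lia, e1] at r1
  rw [show 4 + (2 * (q - 2) + 1) = 2 * q + 1 by lia, e2] at r2
  rcases h4 with h4 | h4
  · grind
  · by_cases q2 : q = 2
    · subst q2; exact h4.1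
    have e3 := ih (q - 3) (by lia) (by lia)
    have r3 := h.rain (a := 6) (b := 2 * (q - 3) + 1) (by lia) (by lia) (by lia)
    rw [show 6 + (2 * (q - 3) + 1) = 2 * q + 1 by lia, e3] at r3
    grind

lemma GoodCol.five_case {m : ℕ} {χ : ℕ → ℕ} (h : GoodCol m χ) (h2 : χ 2 ≠ χ 1) (h3 : χ 3 = χ 2)
    (h4 : χ 4 = χ 1) (h5 : χ 5 ≠ χ 1) (h5' : χ 5 ≠ χ 2) :
    ∀ q, (5 * q + 1 ≤ m → χ (5 * q + 1) = χ 1) ∧ (5 * q + 2 ≤ m → χ (5 * q + 2) = χ 2) ∧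
      (5 * q + 3 ≤ m → χ (5 * q + 3) = χ 2) ∧ (5 * q + 4 ≤ m → χ (5 * q + 4) = χ 1) := by
  intro q
  induction q with
  | zero => exact ⟨fun _ => rfl, fun _ => rfl, fun _ => h3, fun _ => h4⟩
  | succ q ih =>
    obtain ⟨i1, i2, i3, i4⟩ := ih
    have k1 : 5 * (q + 1) + 1 ≤ m → χ (5 * (q + 1) + 1) = χ 1 := by
      intro hm
      have a1 := h.rain (a := 5) (b := 5 * q + 1) (by lia) (by lia) (by lia)
      have a2 := h.rain (a := 2) (b := 5 * q + 4) (by lia) (by lia) (by lia)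
      rw [show 5 + (5 * q + 1) = 5 * (q + 1) + 1 by lia, i1 (by lia)] at a1
      rw [show 2 + (5 * q + 4) = 5 * (q + 1) + 1 by lia, i4 (by lia)] at a2
      grind
    have k2 : 5 * (q + 1) + 2 ≤ m → χ (5 * (q + 1) + 2) = χ 2 := by
      intro hm
      have a1 := h.rain (a := 5) (b := 5 * q + 2) (by lia) (by lia) (by lia)
      have a2 := h.rain (a := 3) (b := 5 * q + 4) (by lia) (by lia) (by lia)
      rw [show 5 + (5 * q + 2) = 5 * (q + 1) + 2 by lia, i2 (by lia)] at a1
      rw [show 3 + (5 * q + 4) = 5 * (q + 1) + 2 by lia, i4 (by lia)] at a2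
      grind
    have k3 : 5 * (q + 1) + 3 ≤ m → χ (5 * (q + 1) + 3) = χ 2 := by
      intro hm
      have a1 := h.rain (a := 5) (b := 5 * q + 3) (by lia) (by lia) (by lia)
      have a2 := h.rain (a := 2) (b := 5 * (q + 1) + 1) (by lia) (by lia) (by lia)
      rw [show 5 + (5 * q + 3) = 5 * (q + 1) + 3 by lia, i3 (by lia)] at a1
      rw [show 2 + (5 * (q + 1) + 1) = 5 * (q + 1) + 3 by lia, k1 (by lia)] at a2
      grind
    have k4 : 5 * (q + 1) + 4 ≤ m → χ (5 * (q + 1) + 4) = χ 1 := by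
      intro hm
      have a1 := h.rain (a := 5) (b := 5 * q + 4) (by lia) (by lia) (by lia)
      have a2 := h.rain (a := 3) (b := 5 * (q + 1) + 1) (by lia) (by lia) (by lia)
      rw [show 5 + (5 * q + 4) = 5 * (q + 1) + 4 by lia, i4 (by lia)] at a1
      rw [show 3 + (5 * (q + 1) + 1) = 5 * (q + 1) + 4 by lia, k1 (by lia)] at a2
      grind
    exact ⟨k1, k2, k3, k4⟩

lemma GoodCol.dilate {m : ℕ} {χ : ℕ → ℕ} (h : GoodCol m χ) (d : ℕ) (hd : 1 ≤ d) :
    GoodCol (m / d) (fun q => χ (d * q)) := by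
  constructor
  · intro a b ha hab hm
    have h1 : d * (a + b) ≤ m := (Nat.mul_le_mul_left d hm).trans (Nat.mul_div_le m d)
    have h2 := h.mono (a := d * a) (b := d * b) (Nat.mul_pos hd ha)
      (Nat.mul_lt_mul_of_pos_left hab hd) (by rw [← mul_add]; exact h1)
    simpa only [mul_add] using h2
  · intro a b ha hb hm
    have h1 : d * (a + b) ≤ m := (Nat.mul_le_mul_left d hm).trans (Nat.mul_div_le m d)
    have h2 := h.rain (a := d * a) (b := d * b) (Nat.mul_pos hd ha)
      (Nat.mul_pos hd hb) (by rw [← mul_add]; exact h1)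
    simpa only [mul_add] using h2

/-- One step of the reduction: remove one color (dividing by 2) or two (dividing by 5). -/
lemma GoodCol.reduce {m : ℕ} {χ : ℕ → ℕ} (h : GoodCol m χ) (hm : 10 ≤ m) (C : Finset ℕ)
    (hC : ∀ x, 1 ≤ x → x ≤ m → χ x ∈ C) :
    (∃ (χ' : ℕ → ℕ) (C' : Finset ℕ), GoodCol (m / 2) χ' ∧ (∀ x, 1 ≤ x → x ≤ m / 2 → χ' x ∈ C') ∧
      C'.card + 1 = C.card) ∨
    (∃ (χ' : ℕ → ℕ) (C' : Finset ℕ), GoodCol (m / 5) χ' ∧ (∀ x, 1 ≤ x → x ≤ m / 5 → χ' x ∈ C') ∧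
      C'.card + 2 = C.card) := by
  have m1 : χ 1 ∈ C := hC 1 (by lia) (by lia)
  have m2 : χ 2 ∈ C := hC 2 (by lia) (by lia)
  rcases h.start hm with ⟨h2, h3, h4⟩ | ⟨h2, h3, h4, h5, h5'⟩
  · left
    refine ⟨fun q => χ (2 * q), C.erase (χ 1), h.dilate 2 (by lia), ?_,
      Finset.card_erase_add_one m1⟩
    intro x hx hxm
    refine Finset.mem_erase.2 ⟨?_, hC _ (by lia) (by lia)⟩
    intro e
    have e : χ (2 * x) = χ 1 := e
    by_cases x1 : x = 1
    · subst x1; exact h2 e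
    have o := h.odd_case h2 h3 h4 (x - 1) (by lia)
    refine h.mono (a := 1) (b := 2 * (x - 1) + 1) (by lia) (by lia) (by lia) ⟨o.symm, ?_⟩
    rw [o, show 1 + (2 * (x - 1) + 1) = 2 * x by lia, e]
  · right
    have m2' : χ 2 ∈ C.erase (χ 1) := Finset.mem_erase.2 ⟨h2, m2⟩
    refine ⟨fun q => χ (5 * q), (C.erase (χ 1)).erase (χ 2), h.dilate 5 (by lia), ?_, ?_⟩
    · intro x hx hxm
      obtain ⟨i1, i2, i3, i4⟩ := h.five_case h2 h3 h4 h5 h5' (x - 1)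
      refine Finset.mem_erase.2 ⟨?_, Finset.mem_erase.2 ⟨?_, hC _ (by lia) (by lia)⟩⟩
      · intro e
        have e : χ (5 * x) = χ 2 := e
        have o := i3 (by lia)
        refine h.mono (a := 2) (b := 5 * (x - 1) + 3) (by lia) (by lia) (by lia) ⟨o.symm, ?_⟩
        rw [o, show 2 + (5 * (x - 1) + 3) = 5 * x by lia, e]
      · intro e
        have e : χ (5 * x) = χ 1 := e
        have o := i4 (by lia)
        refine h.mono (a := 1) (b := 5 * (x - 1) + 4) (by lia) (by lia) (by lia) ⟨o.symm, ?_⟩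
        rw [o, show 1 + (5 * (x - 1) + 4) = 5 * x by lia, e]
    · have a := Finset.card_erase_add_one m1
      have b := Finset.card_erase_add_one m2'
      lia

lemma bound_one {m : ℕ} {χ : ℕ → ℕ} (h : GoodCol m χ) (C : Finset ℕ)
    (hC : ∀ x, 1 ≤ x → x ≤ m → χ x ∈ C) (hc : C.card ≤ 1) : m < 3 := by
  by_contra hm
  have hh := Finset.card_le_one.1 hc
  exact h.mono (a := 1) (b := 2) (by lia) (by lia) (by lia)
    ⟨hh _ (hC 1 (by lia) (by lia)) _ (hC 2 (by lia) (by lia)),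
      hh _ (hC 2 (by lia) (by lia)) _ (hC _ (by lia) (by lia))⟩

lemma no_two (c1 c2 c3 c4 c5 c6 c7 c8 c9 : Bool)
    (m1_2 : ¬ (c1 = c2 ∧ c2 = c3))
    (m1_3 : ¬ (c1 = c3 ∧ c3 = c4))
    (m1_4 : ¬ (c1 = c4 ∧ c4 = c5))
    (m2_3 : ¬ (c2 = c3 ∧ c3 = c5))
    (m1_5 : ¬ (c1 = c5 ∧ c5 = c6))
    (m2_4 : ¬ (c2 = c4 ∧ c4 = c6))
    (m1_6 : ¬ (c1 = c6 ∧ c6 = c7))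
    (m2_5 : ¬ (c2 = c5 ∧ c5 = c7))
    (m3_4 : ¬ (c3 = c4 ∧ c4 = c7))
    (m1_7 : ¬ (c1 = c7 ∧ c7 = c8))
    (m2_6 : ¬ (c2 = c6 ∧ c6 = c8))
    (m3_5 : ¬ (c3 = c5 ∧ c5 = c8))
    (m1_8 : ¬ (c1 = c8 ∧ c8 = c9))
    (m2_7 : ¬ (c2 = c7 ∧ c7 = c9))
    (m3_6 : ¬ (c3 = c6 ∧ c6 = c9))
    (m4_5 : ¬ (c4 = c5 ∧ c5 = c9)) : False := by
  cases c1 <;> cases c2 <;> cases c3 <;> cases c4 <;> cases c5 <;> cases c6 <;> cases c7 <;>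
    cases c8 <;> simp_all

lemma bound_two {m : ℕ} {χ : ℕ → ℕ} (h : GoodCol m χ) (C : Finset ℕ)
    (hC : ∀ x, 1 ≤ x → x ≤ m → χ x ∈ C) (hc : C.card ≤ 2) : m < 9 := by
  by_contra hm
  have two : ∀ x y, 1 ≤ x → x ≤ m → 1 ≤ y → y ≤ m →
      (decide (χ x = χ 1) = decide (χ y = χ 1)) → χ x = χ y := by
    intro x y hx hxm hy hym e
    by_contra hne
    have e' : χ x = χ 1 ↔ χ y = χ 1 := by simpa using e
    have hx1 : χ x ≠ χ 1 := fun q => hne (q.trans (e'.1 q).symm)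
    have hy1 : χ y ≠ χ 1 := fun q => hx1 (e'.2 q)
    have : 2 < C.card := Finset.two_lt_card.2
      ⟨χ x, hC x hx hxm, χ y, hC y hy hym, χ 1, hC 1 (by lia) (by lia), hne, hx1, hy1⟩
    lia
  have key : ∀ a b, 1 ≤ a → a < b → a + b ≤ 9 →
      ¬ (decide (χ a = χ 1) = decide (χ b = χ 1) ∧
        decide (χ b = χ 1) = decide (χ (a + b) = χ 1)) := by
    intro a b ha hab hs ⟨e1, e2⟩
    exact h.mono ha hab (by lia) ⟨two a b (by lia) (by lia) (by lia) (by lia) e1,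
      two b (a + b) (by lia) (by lia) (by lia) (by lia) e2⟩
  exact no_two (decide (χ 1 = χ 1)) (decide (χ 2 = χ 1)) (decide (χ 3 = χ 1)) (decide (χ 4 = χ 1)) (decide (χ 5 = χ 1)) (decide (χ 6 = χ 1)) (decide (χ 7 = χ 1)) (decide (χ 8 = χ 1)) (decide (χ 9 = χ 1))
    (key 1 2 (by lia) (by lia) (by lia))
    (key 1 3 (by lia) (by lia) (by lia))
    (key 1 4 (by lia) (by lia) (by lia))
    (key 2 3 (by lia) (by lia) (by lia))
    (key 1 5 (by lia) (by lia) (by lia))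
    (key 2 4 (by lia) (by lia) (by lia))
    (key 1 6 (by lia) (by lia) (by lia))
    (key 2 5 (by lia) (by lia) (by lia))
    (key 3 4 (by lia) (by lia) (by lia))
    (key 1 7 (by lia) (by lia) (by lia))
    (key 2 6 (by lia) (by lia) (by lia))
    (key 3 5 (by lia) (by lia) (by lia))
    (key 1 8 (by lia) (by lia) (by lia))
    (key 2 7 (by lia) (by lia) (by lia))
    (key 3 6 (by lia) (by lia) (by lia))
    (key 4 5 (by lia) (by lia) (by lia))

lemma bound_all (k : ℕ) : ∀ (m : ℕ) (χ : ℕ → ℕ) (C : Finset ℕ), GoodCol m χ →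
    (∀ x, 1 ≤ x → x ≤ m → χ x ∈ C) →
    (C.card ≤ 2 * k + 2 → m < 9 * 5 ^ k) ∧ (C.card ≤ 2 * k + 3 → m < 18 * 5 ^ k) := by
  induction k with
  | zero =>
    intro m χ C h hC
    refine ⟨fun hc => by simpa using bound_two h C hC (by lia), fun hc => ?_⟩
    by_contra hm
    simp only [pow_zero] at hm
    rcases h.reduce (by lia) C hC with ⟨χ', C', h', hC', e⟩ | ⟨χ', C', h', hC', e⟩
    · have := bound_two h' C' hC' (by lia)
      lia
    · have := bound_one h' C' hC' (by lia)
      lia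
  | succ k ih =>
    have step : ∀ (m : ℕ) (χ : ℕ → ℕ) (C : Finset ℕ), GoodCol m χ →
        (∀ x, 1 ≤ x → x ≤ m → χ x ∈ C) → C.card ≤ 2 * (k + 1) + 2 → m < 9 * 5 ^ (k + 1) := by
      intro m χ C h hC hc
      by_contra hm
      have hp : 1 ≤ 5 ^ k := Nat.one_le_pow _ _ (by lia)
      rw [pow_succ] at hm
      rcases h.reduce (by lia) C hC with ⟨χ', C', h', hC', e⟩ | ⟨χ', C', h', hC', e⟩
      · have := (ih _ χ' C' h' hC').2 (by lia)
        lia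
      · have := (ih _ χ' C' h' hC').1 (by lia)
        lia
    intro m χ C h hC
    refine ⟨step m χ C h hC, fun hc => ?_⟩
    by_contra hm
    have hp : 1 ≤ 5 ^ k := Nat.one_le_pow _ _ (by lia)
    rw [pow_succ] at hm
    rcases h.reduce (by lia) C hC with ⟨χ', C', h', hC', e⟩ | ⟨χ', C', h', hC', e⟩
    · have := step _ χ' C' h' hC' (by lia)
      rw [pow_succ] at this
      lia
    · have := (ih _ χ' C' h' hC').2 (by lia)
      lia

/-- The extremal coloring. -/
def exCol : ℕ → ℕ → ℕ
  | 0, x => if x % 2 = 1 then 3 else if x = 2 ∨ x = 4 ∨ x = 8 ∨ x = 16 then 1 else 2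
  | k + 1, x => if x % 5 = 0 then exCol k (x / 5)
      else if x % 5 = 1 ∨ x % 5 = 4 then 2 * k + 4 else 2 * k + 5

lemma exCol_range (k x : ℕ) : 1 ≤ exCol k x ∧ exCol k x ≤ 2 * k + 3 := by
  induction k generalizing x with
  | zero => unfold exCol; split_ifs <;> lia
  | succ k ih =>
    have := ih (x / 5)
    unfold exCol; split_ifs <;> lia

lemma exCol_surj (k i : ℕ) (h1 : 1 ≤ i) (h2 : i ≤ 2 * k + 3) :
    ∃ x, 1 ≤ x ∧ x ≤ 18 * 5 ^ k - 1 ∧ exCol k x = i := by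
  induction k with
  | zero =>
    have : i = 1 ∨ i = 2 ∨ i = 3 := by lia
    rcases this with rfl | rfl | rfl
    · exact ⟨2, by decide⟩
    · exact ⟨6, by decide⟩
    · exact ⟨1, by decide⟩
  | succ k ih =>
    have hp : 1 ≤ 5 ^ k := Nat.one_le_pow _ _ (by lia)
    rw [pow_succ]
    by_cases h : i ≤ 2 * k + 3
    · obtain ⟨x, a, b, c⟩ := ih h
      exact ⟨5 * x, by lia, by lia, by simp [exCol, c]⟩
    · by_cases h' : i = 2 * k + 4
      · exact ⟨1, by lia, by lia, by simp [exCol, h']⟩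
      · exact ⟨2, by lia, by lia, by simp [exCol]; lia⟩

lemma exCol_zero : GoodCol 17 (exCol 0) := by
  have key1 : ∀ a b : Fin 17, (1 ≤ a.1 ∧ a.1 < b.1 ∧ a.1 + b.1 ≤ 17) →
      ¬ (exCol 0 a.1 = exCol 0 b.1 ∧ exCol 0 b.1 = exCol 0 (a.1 + b.1)) := by decide
  have key2 : ∀ a b : Fin 17, (1 ≤ a.1 ∧ 1 ≤ b.1 ∧ a.1 + b.1 ≤ 17) →
      (exCol 0 a.1 = exCol 0 b.1 ∨ exCol 0 a.1 = exCol 0 (a.1 + b.1) ∨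
        exCol 0 b.1 = exCol 0 (a.1 + b.1)) := by
    decide
  exact ⟨fun {a b} h1 h2 h3 => key1 ⟨a, by lia⟩ ⟨b, by lia⟩ ⟨h1, h2, h3⟩,
    fun {a b} h1 h2 h3 => key2 ⟨a, by lia⟩ ⟨b, by lia⟩ ⟨h1, h2, h3⟩⟩

lemma exCol_good (k : ℕ) : GoodCol (18 * 5 ^ k - 1) (exCol k) := by
  induction k with
  | zero => exact exCol_zero
  | succ k ih =>
    have hp : 1 ≤ 5 ^ k := Nat.one_le_pow _ _ (by lia)
    rw [pow_succ]
    constructor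
    · intro a b ha hab hm
      have ra := exCol_range k (a / 5)
      have rb := exCol_range k (b / 5)
      have rc := exCol_range k ((a + b) / 5)
      by_cases h0 : a % 5 = 0 ∧ b % 5 = 0
      · have := ih.mono (a := a / 5) (b := b / 5) (by lia) (by lia) (by lia)
        rw [show a / 5 + b / 5 = (a + b) / 5 by lia] at this
        simpa [exCol, h0.1, h0.2, show (a + b) % 5 = 0 by lia] using this
      · simp only [exCol]
        split_ifs <;> lia
    · intro a b ha hb hm
      have ra := exCol_range k (a / 5)
      have rb := exCol_range k (b / 5)
      have rc := exCol_range k ((a + b) / 5)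
      by_cases h0 : a % 5 = 0 ∧ b % 5 = 0
      · have := ih.rain (a := a / 5) (b := b / 5) (by lia) (by lia) (by lia)
        rw [show a / 5 + b / 5 = (a + b) / 5 by lia] at this
        simpa [exCol, h0.1, h0.2, show (a + b) % 5 = 0 by lia] using this
      · simp only [exCol]
        split_ifs <;> lia

/-- For every odd `r ≥ 3`, there is a weak Gallai–Schur `r`-coloring of
`[1, 18·5^((r-3)/2) - 1]`, no weak Gallai–Schur `r`-coloring of `[1, m]` exists
for any `m ≥ 18·5^((r-3)/2)`, and consequently `WGS r = 18·5^((r-3)/2)`. -/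
theorem weak_WGS_odd (r : ℕ) (hr : 3 ≤ r) (hro : Odd r) :
    (∃ χ : ℕ → ℕ, WeakGS (18 * 5 ^ ((r - 3) / 2) - 1) (Finset.Icc 1 r) χ) ∧
    (∀ m, 18 * 5 ^ ((r - 3) / 2) ≤ m → ∀ χ : ℕ → ℕ, ¬ WeakGS m (Finset.Icc 1 r) χ) ∧
    WGS r = 18 * 5 ^ ((r - 3) / 2) := by
  obtain ⟨k, hk⟩ : ∃ k, r = 2 * k + 3 := by
    obtain ⟨j, hj⟩ := hro
    exact ⟨j - 1, by lia⟩
  have hk' : (r - 3) / 2 = k := by lia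
  rw [hk']
  have A : ∃ χ : ℕ → ℕ, WeakGS (18 * 5 ^ k - 1) (Finset.Icc 1 r) χ := by
    refine ⟨exCol k, (weakGS_iff _ _ _).2 ⟨?_, ?_, exCol_good k⟩⟩
    · intro x _ _
      have := exCol_range k x
      exact Finset.mem_Icc.2 ⟨this.1, by lia⟩
    · intro i hi
      rw [Finset.mem_Icc] at hi
      exact exCol_surj k i hi.1 (by lia)
  have B : ∀ m, 18 * 5 ^ k ≤ m → ∀ χ : ℕ → ℕ, ¬ WeakGS m (Finset.Icc 1 r) χ := by
    intro m hm χ hχ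
    obtain ⟨h1, -, h3⟩ := (weakGS_iff _ _ _).1 hχ
    have := (bound_all k m χ _ h3 h1).2 (by simp [hk])
    lia
  refine ⟨A, B, le_antisymm (Nat.sInf_le B) (le_csInf ⟨_, B⟩ ?_)⟩
  intro n hn
  by_contra hlt
  obtain ⟨χ, hχ⟩ := A
  exact hn _ (by lia) χ hχ
end

section
/- Every weak Gallai-Schur 2-coloring χ of [1, 8] satisfies χ(1) = χ(2) = χ(4) = χ(8), χ(3) = χ(5) = χ(6) = χ(7), and χ(1) ≠ χ(3); that is, up to relabeling of colors, the unique weak Gallai-Schur 2-coloring of [1,8] has color classes {1, 2, 4, 8} and {3, 5, 6, 7}. -/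
/-- Every weak Gallai–Schur `2`-coloring `χ` of `[1, 8]` satisfies
`χ 1 = χ 2 = χ 4 = χ 8`, `χ 3 = χ 5 = χ 6 = χ 7`, and `χ 1 ≠ χ 3`; i.e., up to
relabeling of colors the unique such coloring has color classes `{1, 2, 4, 8}`
and `{3, 5, 6, 7}`. -/
theorem weak_two_color_unique (χ : ℕ → ℕ)
    (h : WeakGS 8 (Finset.Icc 1 2) χ) :
    (χ 1 = χ 2 ∧ χ 2 = χ 4 ∧ χ 4 = χ 8) ∧
    (χ 3 = χ 5 ∧ χ 5 = χ 6 ∧ χ 6 = χ 7) ∧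
    χ 1 ≠ χ 3 := by
  obtain ⟨hr, -, hm, -⟩ := h
  have r1 := hr 1 (by decide)
  have r2 := hr 2 (by decide)
  have r3 := hr 3 (by decide)
  have r4 := hr 4 (by decide)
  have r5 := hr 5 (by decide)
  have r6 := hr 6 (by decide)
  have r7 := hr 7 (by decide)
  have r8 := hr 8 (by decide)
  have m12 := hm 1 (by decide) 2 (by decide) 3 (by decide) (by decide) (by decide) (by decide) (by decide)
  have m13 := hm 1 (by decide) 3 (by decide) 4 (by decide) (by decide) (by decide) (by decide) (by decide)
  have m14 := hm 1 (by decide) 4 (by decide) 5 (by decide) (by decide) (by decide) (by decide) (by decide)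
  have m15 := hm 1 (by decide) 5 (by decide) 6 (by decide) (by decide) (by decide) (by decide) (by decide)
  have m16 := hm 1 (by decide) 6 (by decide) 7 (by decide) (by decide) (by decide) (by decide) (by decide)
  have m17 := hm 1 (by decide) 7 (by decide) 8 (by decide) (by decide) (by decide) (by decide) (by decide)
  have m23 := hm 2 (by decide) 3 (by decide) 5 (by decide) (by decide) (by decide) (by decide) (by decide)
  have m24 := hm 2 (by decide) 4 (by decide) 6 (by decide) (by decide) (by decide) (by decide) (by decide)
  have m25 := hm 2 (by decide) 5 (by decide) 7 (by decide) (by decide) (by decide) (by decide) (by decide)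
  have m26 := hm 2 (by decide) 6 (by decide) 8 (by decide) (by decide) (by decide) (by decide) (by decide)
  have m34 := hm 3 (by decide) 4 (by decide) 7 (by decide) (by decide) (by decide) (by decide) (by decide)
  have m35 := hm 3 (by decide) 5 (by decide) 8 (by decide) (by decide) (by decide) (by decide) (by decide)
  clear hr hm
  simp only [Finset.mem_Icc] at r1 r2 r3 r4 r5 r6 r7 r8
  generalize χ 1 = c1 at *
  generalize χ 2 = c2 at *
  generalize χ 3 = c3 at *
  generalize χ 4 = c4 at *
  generalize χ 5 = c5 at *
  generalize χ 6 = c6 at *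
  generalize χ 7 = c7 at *
  generalize χ 8 = c8 at *
  replace r1 : c1 = 1 ∨ c1 = 2 := by clear * - r1; omega
  replace r2 : c2 = 1 ∨ c2 = 2 := by clear * - r2; omega
  replace r3 : c3 = 1 ∨ c3 = 2 := by clear * - r3; omega
  replace r4 : c4 = 1 ∨ c4 = 2 := by clear * - r4; omega
  replace r5 : c5 = 1 ∨ c5 = 2 := by clear * - r5; omega
  replace r6 : c6 = 1 ∨ c6 = 2 := by clear * - r6; omega
  replace r7 : c7 = 1 ∨ c7 = 2 := by clear * - r7; omega
  replace r8 : c8 = 1 ∨ c8 = 2 := by clear * - r8; omega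
  rcases r1 with rfl | rfl <;> rcases r2 with rfl | rfl <;> rcases r3 with rfl | rfl <;>
    rcases r4 with rfl | rfl <;> simp at * <;> grind
end

section
/- Every weak Gallai-Schur 3-coloring χ of [1, 17] has, up to relabeling of colors, the color classes {1, 3, 5, 7, 9, 11, 13, 15, 17}, {2, 4, 8, 16}, and {6, 10, 12, 14}. -/
/-- The colors `[χ k, …, χ 1]`. -/
def revPrefix (χ : ℕ → ℕ) : ℕ → List ℕ
  | 0 => []
  | k + 1 => χ (k + 1) :: revPrefix χ k

/-- Whether color `c` may be given to `k + 1`, when `[1, k]` is colored by `p` (reversed). -/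
def okExt (p : List ℕ) (k c : ℕ) : Bool :=
  (List.range k).all fun i =>
    !((i != k - 1 - i) && (p.getD i 0 == c) && (p.getD (k - 1 - i) 0 == c)) &&
    !((p.getD i 0 != p.getD (k - 1 - i) 0) && (p.getD i 0 != c) && (p.getD (k - 1 - i) 0 != c))

/-- All admissible colorings of `[1, k]`. -/
def allCol : ℕ → List (List ℕ)
  | 0 => [[]]
  | k + 1 => (allCol k).flatMap fun p =>
      ([1, 2, 3].filter fun c => okExt p k c).map fun c => c :: p

lemma revPrefix_getD (χ : ℕ → ℕ) (k i : ℕ) (hi : i < k) :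
    (revPrefix χ k).getD i 0 = χ (k - i) := by
  induction k generalizing i with
  | zero => omega
  | succ k ih =>
    cases i with
    | zero => simp [revPrefix]
    | succ i =>
      have := ih i (by omega)
      simp only [revPrefix, List.getD_cons_succ, this]
      congr 1
      omega

lemma revPrefix_mem (χ : ℕ → ℕ) (h : WeakGS 17 (Finset.Icc 1 3) χ) (k : ℕ) (hk : k ≤ 17) :
    revPrefix χ k ∈ allCol k := by
  induction k with
  | zero => simp [revPrefix, allCol]
  | succ k ih =>
    obtain ⟨h1, -, h3, h4⟩ := h
    simp only [revPrefix, allCol, List.mem_flatMap, List.mem_map, List.mem_filter]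
    refine ⟨_, ih (by omega), χ (k + 1), ⟨?_, ?_⟩, rfl⟩
    · have := h1 (k + 1) (by simp; omega)
      simp only [Finset.mem_Icc] at this
      simp only [List.mem_cons, List.not_mem_nil, or_false]
      omega
    · simp only [okExt, List.all_eq_true, List.mem_range]
      intro i hi
      rw [revPrefix_getD χ k i hi, revPrefix_getD χ k (k - 1 - i) (by omega)]
      have e : k - (k - 1 - i) = i + 1 := by omega
      rw [e]
      have m1 : k - i ∈ Finset.Icc 1 17 := by simp only [Finset.mem_Icc]; omega
      have m2 : i + 1 ∈ Finset.Icc 1 17 := by simp only [Finset.mem_Icc]; omega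
      have m3 : k + 1 ∈ Finset.Icc 1 17 := by simp only [Finset.mem_Icc]; omega
      have a3 := h3 _ m1 _ m2 _ m3 (by omega)
      have a4 := h4 _ m1 _ m2 _ m3 (by omega)
      simp only [Bool.and_eq_true, Bool.not_eq_true', Bool.and_eq_false_iff, bne_eq_false_iff_eq,
        beq_eq_false_iff_ne]
      constructor
      · by_cases hne : i = k - 1 - i
        · exact Or.inl (Or.inl hne)
        · have := a3 (by omega) (by omega) (by omega)
          by_cases q : χ (k - i) = χ (k + 1)
          · right
            intro q2
            exact this ⟨q.trans q2.symm, q2⟩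
          · exact Or.inl (Or.inr q)
      · tauto

/-- The unique coloring pattern, reversed. -/
def pattern (a b c : ℕ) : List ℕ := [a, b, a, c, a, c, a, c, a, b, a, c, a, b, a, b, a]

lemma allCol_pattern : ∀ p ∈ allCol 17, ∃ q ∈ [(1, 2, 3), (1, 3, 2), (2, 1, 3), (2, 3, 1),
    (3, 1, 2), (3, 2, 1)], p = pattern q.1 q.2.1 q.2.2 := by
  decide +kernel

/-- Every weak Gallai–Schur `3`-coloring of `[1, 17]` has, up to relabeling of
colors, the color classes `{1, 3, 5, 7, 9, 11, 13, 15, 17}`, `{2, 4, 8, 16}`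
and `{6, 10, 12, 14}`. -/
theorem weak_three_color_unique (χ : ℕ → ℕ)
    (h : WeakGS 17 (Finset.Icc 1 3) χ) :
    ∃ c₁ c₂ c₃ : ℕ, ({c₁, c₂, c₃} : Finset ℕ) = Finset.Icc 1 3 ∧
      ∀ x ∈ Finset.Icc 1 17,
        (χ x = c₁ ↔ x ∈ ({1, 3, 5, 7, 9, 11, 13, 15, 17} : Finset ℕ)) ∧
        (χ x = c₂ ↔ x ∈ ({2, 4, 8, 16} : Finset ℕ)) ∧
        (χ x = c₃ ↔ x ∈ ({6, 10, 12, 14} : Finset ℕ)) := by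
  have hm := allCol_pattern _ (revPrefix_mem χ h 17 le_rfl)
  obtain ⟨⟨a, b, c⟩, hq, he⟩ := hm
  simp only [revPrefix, pattern, List.cons.injEq] at he
  norm_num at he
  obtain ⟨e17, e16, e15, e14, e13, e12, e11, e10, e9, e8, e7, e6, e5, e4, e3, e2, e1⟩ := he
  have hs : ({a, b, c} : Finset ℕ) = Finset.Icc 1 3 ∧ a ≠ b ∧ a ≠ c ∧ b ≠ c := by
    simp only [List.mem_cons, Prod.mk.injEq, List.not_mem_nil, or_false] at hq
    rcases hq with ⟨rfl, rfl, rfl⟩ | ⟨rfl, rfl, rfl⟩ | ⟨rfl, rfl, rfl⟩ | ⟨rfl, rfl, rfl⟩ |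
      ⟨rfl, rfl, rfl⟩ | ⟨rfl, rfl, rfl⟩ <;> decide
  obtain ⟨hs, hab, hac, hbc⟩ := hs
  refine ⟨a, b, c, hs, ?_⟩
  intro x hx
  simp only [Finset.mem_Icc] at hx
  obtain ⟨hx1, hx2⟩ := hx
  interval_cases x <;> simp [*, hab.symm, hac.symm, hbc.symm]
end

section
/- Every strong Gallai-Schur 3-coloring χ of [1, 9] has, up to relabeling of colors, either the color classes {1, 4, 6, 9}, {2, 3, 7, 8}, {5}, or the color classes {1, 3, 5, 7, 9}, {2, 8}, {4, 6}. -/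
/-- The triple of colors is neither monochromatic nor rainbow. -/
abbrev GoodTriple (a b c : Fin 3) : Prop :=
  ¬(a = b ∧ b = c) ∧ ¬(a ≠ b ∧ a ≠ c ∧ b ≠ c)

set_option maxRecDepth 100000 in
set_option synthInstance.maxSize 100000 in
set_option synthInstance.maxHeartbeats 4000000 in
set_option maxHeartbeats 4000000 in
theorem fin_case :
    ∀ x1 : Fin 3, 
    ∀ x2 : Fin 3, GoodTriple x1 x1 x2 → 
    ∀ x3 : Fin 3, GoodTriple x1 x2 x3 → 
    ∀ x4 : Fin 3, GoodTriple x1 x3 x4 → GoodTriple x2 x2 x4 → 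
    ∀ x5 : Fin 3, GoodTriple x1 x4 x5 → GoodTriple x2 x3 x5 → 
    ∀ x6 : Fin 3, GoodTriple x1 x5 x6 → GoodTriple x2 x4 x6 → GoodTriple x3 x3 x6 → 
    ∀ x7 : Fin 3, GoodTriple x1 x6 x7 → GoodTriple x2 x5 x7 → GoodTriple x3 x4 x7 → 
    ∀ x8 : Fin 3, GoodTriple x1 x7 x8 → GoodTriple x2 x6 x8 → GoodTriple x3 x5 x8 → GoodTriple x4 x4 x8 → 
    ∀ x9 : Fin 3, GoodTriple x1 x8 x9 → GoodTriple x2 x7 x9 → GoodTriple x3 x6 x9 → GoodTriple x4 x5 x9 → 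
    (x1 = 0 ∨ x2 = 0 ∨ x3 = 0 ∨ x4 = 0 ∨ x5 = 0 ∨ x6 = 0 ∨ x7 = 0 ∨ x8 = 0 ∨ x9 = 0) →
    (x1 = 1 ∨ x2 = 1 ∨ x3 = 1 ∨ x4 = 1 ∨ x5 = 1 ∨ x6 = 1 ∨ x7 = 1 ∨ x8 = 1 ∨ x9 = 1) →
    (x1 = 2 ∨ x2 = 2 ∨ x3 = 2 ∨ x4 = 2 ∨ x5 = 2 ∨ x6 = 2 ∨ x7 = 2 ∨ x8 = 2 ∨ x9 = 2) →
    (x4 = x1 ∧ x6 = x1 ∧ x9 = x1 ∧ x3 = x2 ∧ x7 = x2 ∧ x8 = x2 ∧ x1 ≠ x2 ∧ x1 ≠ x5 ∧ x2 ≠ x5) ∨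
    (x3 = x1 ∧ x5 = x1 ∧ x7 = x1 ∧ x9 = x1 ∧ x8 = x2 ∧ x6 = x4 ∧ x1 ≠ x2 ∧ x1 ≠ x4 ∧ x2 ≠ x4) := by
  decide

/-- Every strong Gallai–Schur `3`-coloring of `[1, 9]` has, up to relabeling of
colors, either the color classes `{1, 4, 6, 9}`, `{2, 3, 7, 8}`, `{5}`, or the
color classes `{1, 3, 5, 7, 9}`, `{2, 8}`, `{4, 6}`. -/
theorem strong_three_color_unique (χ : ℕ → ℕ)
    (h : StrongGS 9 (Finset.Icc 1 3) χ) :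
    ∃ c₁ c₂ c₃ : ℕ, ({c₁, c₂, c₃} : Finset ℕ) = Finset.Icc 1 3 ∧
      ((∀ x ∈ Finset.Icc 1 9,
          (χ x = c₁ ↔ x ∈ ({1, 4, 6, 9} : Finset ℕ)) ∧
          (χ x = c₂ ↔ x ∈ ({2, 3, 7, 8} : Finset ℕ)) ∧
          (χ x = c₃ ↔ x ∈ ({5} : Finset ℕ))) ∨
       (∀ x ∈ Finset.Icc 1 9,
          (χ x = c₁ ↔ x ∈ ({1, 3, 5, 7, 9} : Finset ℕ)) ∧
          (χ x = c₂ ↔ x ∈ ({2, 8} : Finset ℕ)) ∧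
          (χ x = c₃ ↔ x ∈ ({4, 6} : Finset ℕ)))) := by
  obtain ⟨h1, h2, h3, h4⟩ := h
  have hy : ∀ n ∈ Finset.Icc 1 9, ∃ y : Fin 3, χ n = y.val + 1 := by
    intro n hn
    have := Finset.mem_Icc.1 (h1 n hn)
    exact ⟨⟨χ n - 1, by omega⟩, by simp only; omega⟩
  choose! y hy using hy
  have key : ∀ a ∈ Finset.Icc 1 9, ∀ b ∈ Finset.Icc 1 9, (χ a = χ b ↔ y a = y b) := by
    intro a ha b hb
    rw [hy a ha, hy b hb, Fin.ext_iff]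
    omega
  have good : ∀ a ∈ Finset.Icc 1 9, ∀ b ∈ Finset.Icc 1 9, a + b ∈ Finset.Icc 1 9 →
      GoodTriple (y a) (y b) (y (a + b)) := by
    intro a ha b hb hc
    have e3 := h3 a ha b hb _ hc rfl
    have e4 := h4 a ha b hb _ hc rfl
    simp only [ne_eq, key a ha b hb, key b hb _ hc, key a ha _ hc] at e3 e4
    exact ⟨e3, e4⟩
  have surj : ∀ i : Fin 3, y 1 = i ∨ y 2 = i ∨ y 3 = i ∨ y 4 = i ∨ y 5 = i ∨ y 6 = i ∨
      y 7 = i ∨ y 8 = i ∨ y 9 = i := by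
    intro i
    obtain ⟨x, hx, hxi⟩ := h2 (i.val + 1) (by simp only [Finset.mem_Icc]; omega)
    have hi : y x = i := by
      rw [hy x hx] at hxi
      exact Fin.ext (by omega)
    have := Finset.mem_Icc.1 hx
    obtain ⟨_, _⟩ := this
    interval_cases x <;> simp [hi]
  have all3 : ∀ a b c : Fin 3, a ≠ b → a ≠ c → b ≠ c →
      ({a.val + 1, b.val + 1, c.val + 1} : Finset ℕ) = Finset.Icc 1 3 := by decide
  have main := fin_case
    (y 1)
    (y 2) (good 1 (by decide) 1 (by decide) (by decide))
    (y 3) (good 1 (by decide) 2 (by decide) (by decide))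
    (y 4) (good 1 (by decide) 3 (by decide) (by decide)) (good 2 (by decide) 2 (by decide) (by decide))
    (y 5) (good 1 (by decide) 4 (by decide) (by decide)) (good 2 (by decide) 3 (by decide) (by decide))
    (y 6) (good 1 (by decide) 5 (by decide) (by decide)) (good 2 (by decide) 4 (by decide) (by decide)) (good 3 (by decide) 3 (by decide) (by decide))
    (y 7) (good 1 (by decide) 6 (by decide) (by decide)) (good 2 (by decide) 5 (by decide) (by decide)) (good 3 (by decide) 4 (by decide) (by decide))
    (y 8) (good 1 (by decide) 7 (by decide) (by decide)) (good 2 (by decide) 6 (by decide) (by decide)) (good 3 (by decide) 5 (by decide) (by decide)) (good 4 (by decide) 4 (by decide) (by decide))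
    (y 9) (good 1 (by decide) 8 (by decide) (by decide)) (good 2 (by decide) 7 (by decide) (by decide)) (good 3 (by decide) 6 (by decide) (by decide)) (good 4 (by decide) 5 (by decide) (by decide))
    (surj 0) (surj 1) (surj 2)
  rcases main with h | h
  · obtain ⟨e4, e6, e9, e3, e7, e8, n1, n2, n3⟩ := h
    refine ⟨_, _, _, all3 _ _ _ n1 n2 n3, Or.inl ?_⟩
    intro x hx
    rw [hy x hx]
    simp only [Nat.add_right_cancel_iff, ← Fin.ext_iff]
    obtain ⟨_, _⟩ := Finset.mem_Icc.1 hx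
    clear hx
    interval_cases x <;> simp [*, n1.symm, n2.symm, n3.symm]
  · obtain ⟨e3, e5, e7, e9, e8, e6, n1, n2, n3⟩ := h
    refine ⟨_, _, _, all3 _ _ _ n1 n2 n3, Or.inr ?_⟩
    intro x hx
    rw [hy x hx]
    simp only [Nat.add_right_cancel_iff, ← Fin.ext_iff]
    obtain ⟨_, _⟩ := Finset.mem_Icc.1 hx
    clear hx
    interval_cases x <;> simp [*, n1.symm, n2.symm, n3.symm]
end
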